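/- arXiv:1910.00160 — 10 statements merged into one kernel-verified Lean document; each statement's English description precedes it below -/
import Mathlib

section
/- Let G be a finite group and N a subgroup of G. The following are equivalent: (i) for every subgroup H of G, |H ∩ N| = gcd(|H|, |N|); (ii) every subgroup H of G whose order divides |N| is contained in N; (iii) every cyclic subgroup H of G whose order divides |N| is contained in N; (iv) for every cyclic subgroup H of G, |H ∩ N| = gcd(|H|, |N|). -/
/-- If `N` contains every cyclic subgroup whose order divides `|N|`, then it contains every
subgroup whose order divides `|N|`. -/
theorem Subgroup.le_of_card_dvd_of_forall_isCyclic {G : Type*} [Group G] {N : Subgroup G}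
    (hN : ∀ H : Subgroup G, IsCyclic H → Nat.card H ∣ Nat.card N → H ≤ N)
    {K : Subgroup G} (hK : Nat.card K ∣ Nat.card N) : K ≤ N := by
  intro x hx
  have hxK : Subgroup.zpowers x ≤ K := Subgroup.zpowers_le.mpr hx
  exact hN (Subgroup.zpowers x) inferInstance
    ((Subgroup.card_dvd_of_le hxK).trans hK) (Subgroup.mem_zpowers x)

/-- If `N` contains every subgroup whose order divides `|N|`, then `|H ∩ N| = gcd(|H|, |N|)`. -/
theorem Subgroup.card_inf_eq_gcd_of_forall_le {G : Type*} [Group G] [Finite G] {N : Subgroup G}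
    (hN : ∀ K : Subgroup G, Nat.card K ∣ Nat.card N → K ≤ N) (H : Subgroup G) :
    Nat.card (H ⊓ N : Subgroup G) = Nat.gcd (Nat.card H) (Nat.card N) := by
  refine Nat.dvd_antisymm (Nat.dvd_gcd (Subgroup.card_dvd_of_le inf_le_left)
    (Subgroup.card_dvd_of_le inf_le_right)) ?_
  rw [Nat.dvd_iff_prime_pow_dvd_dvd]
  intro p k hp hpk
  have : Fact p.Prime := ⟨hp⟩
  obtain ⟨K, hK⟩ := Sylow.exists_subgroup_card_pow_prime p (hpk.trans (Nat.gcd_dvd_left _ _))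
  have hcard : Nat.card (K.map H.subtype) = p ^ k := by
    rw [Subgroup.card_map_of_injective H.subtype_injective, hK]
  rw [← hcard] at hpk ⊢
  exact Subgroup.card_dvd_of_le
    (le_inf (Subgroup.map_subtype_le K) (hN _ (hpk.trans (Nat.gcd_dvd_right _ _))))

/-- If `|H ∩ N| = gcd(|H|, |N|)` and `|H|` divides `|N|`, then `H ≤ N`. -/
theorem Subgroup.le_of_card_inf_eq_gcd {G : Type*} [Group G] [Finite G] {H N : Subgroup G}
    (h : Nat.card (H ⊓ N : Subgroup G) = Nat.gcd (Nat.card H) (Nat.card N))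
    (hdvd : Nat.card H ∣ Nat.card N) : H ≤ N := by
  rw [Nat.gcd_eq_left hdvd] at h
  exact inf_eq_left.mp (Subgroup.eq_of_le_of_card_ge inf_le_left h.ge)

theorem gcd_property_tfae {G : Type*} [Group G] [Finite G] (N : Subgroup G) :
    List.TFAE
      [∀ H : Subgroup G, Nat.card (H ⊓ N : Subgroup G) = Nat.gcd (Nat.card H) (Nat.card N),
       ∀ H : Subgroup G, Nat.card H ∣ Nat.card N → H ≤ N,
       ∀ H : Subgroup G, IsCyclic H → Nat.card H ∣ Nat.card N → H ≤ N,
       ∀ H : Subgroup G, IsCyclic H →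
         Nat.card (H ⊓ N : Subgroup G) = Nat.gcd (Nat.card H) (Nat.card N)] := by
  tfae_have 1 → 4 := fun h H _ => h H
  tfae_have 4 → 3 := fun h H hH => Subgroup.le_of_card_inf_eq_gcd (h H hH)
  tfae_have 3 → 2 := fun h _ => Subgroup.le_of_card_dvd_of_forall_isCyclic h
  tfae_have 2 → 1 := Subgroup.card_inf_eq_gcd_of_forall_le
  tfae_finish
end

section
/- Let G be a finite group and N a subgroup of G. If every subgroup of G whose order divides |N| is contained in N, then for every subgroup H of G one has |H ∩ N| = gcd(|H|, |N|). -/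
theorem card_inf_eq_gcd_of_subgroups_le {G : Type*} [Group G] [Finite G] (N : Subgroup G)
    (h : ∀ H : Subgroup G, Nat.card H ∣ Nat.card N → H ≤ N) :
    ∀ H : Subgroup G, Nat.card (H ⊓ N : Subgroup G) = Nat.gcd (Nat.card H) (Nat.card N) := by
  intro H
  refine Nat.dvd_antisymm (Nat.dvd_gcd (Subgroup.card_dvd_of_le inf_le_left)
    (Subgroup.card_dvd_of_le inf_le_right)) ?_
  refine (Nat.dvd_iff_prime_pow_dvd_dvd _ _).mpr fun p k hp hpk ↦ ?_
  have := Fact.mk hp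
  obtain ⟨K, hK⟩ := Sylow.exists_subgroup_card_pow_prime p (hpk.trans (Nat.gcd_dvd_left _ _))
  have hKG : Nat.card (K.map H.subtype) = p ^ k := by
    rw [Subgroup.card_map_of_injective H.subtype_injective, hK]
  rw [← hKG]
  refine Subgroup.card_dvd_of_le (le_inf (Subgroup.map_subtype_le K) (h _ ?_))
  rw [hKG]
  exact hpk.trans (Nat.gcd_dvd_right _ _)
end

section
/- Let G be a finite group and N a subgroup of G such that for every subgroup H of G, |H ∩ N| = gcd(|H|, |N|). Then N is a normal subgroup of G. -/
theorem normal_of_gcd_property {G : Type*} [Group G] [Finite G] (N : Subgroup G)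
    (h : ∀ H : Subgroup G, Nat.card (H ⊓ N : Subgroup G) = Nat.gcd (Nat.card H) (Nat.card N)) :
    N.Normal := by
  refine ⟨fun x hx g => ?_⟩
  have horder : orderOf (g * x * g⁻¹) = orderOf x :=
    orderOf_injective (MulAut.conj g).toMonoidHom (MulAut.conj g).injective x
  have hdvd : Nat.card (Subgroup.zpowers (g * x * g⁻¹)) ∣ Nat.card N := by
    rw [Nat.card_zpowers, horder]
    exact N.orderOf_dvd_natCard hx
  have hcard := (h (Subgroup.zpowers (g * x * g⁻¹))).trans (Nat.gcd_eq_left hdvd)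
  have hinf := Subgroup.eq_of_le_of_card_ge inf_le_left hcard.ge
  exact inf_eq_left.mp hinf (Subgroup.mem_zpowers _)
end

section
/- Let G be a finite group and N a normal subgroup of G. Suppose that for each prime p dividing |G| one of the following holds: (i) |N|_p = 1; (ii) |N|_p = |G|_p; (iii) the Sylow p-subgroups of G are cyclic, or they are generalized quaternion groups and |N|_2 = 2. Then G and N satisfy the gcd property, i.e., for every subgroup H of G, |H ∩ N| = gcd(|H|, |N|). -/
/-- A group is generalized quaternion if it is isomorphic to a dicyclic group of order `2 ^ n`
for some `n ≥ 3`, i.e. to `QuaternionGroup (2 ^ (n - 2))`. -/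
def IsGeneralizedQuaternion (Q : Type*) [Group Q] : Prop :=
  ∃ n : ℕ, 3 ≤ n ∧ Nonempty (Q ≃* QuaternionGroup (2 ^ (n - 2)))

theorem Subgroup.eq_of_ncard_pow_eq_one_le {Q : Type*} [Group Q] [Finite Q] {n : ℕ}
    (hn : {x : Q | x ^ n = 1}.ncard ≤ n) {A B : Subgroup Q}
    (hA : Nat.card A = n) (hB : Nat.card B = n) : A = B := by
  have coe_eq : ∀ C : Subgroup Q, Nat.card C = n → (C : Set Q) = {x : Q | x ^ n = 1} := by
    intro C hC
    refine Set.eq_of_subset_of_ncard_le (fun x hx => ?_) ?_ (Set.toFinite _)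
    · exact orderOf_dvd_iff_pow_eq_one.mp (hC ▸ C.orderOf_dvd_natCard hx)
    · rwa [← Nat.card_coe_set_eq (C : Set Q), SetLike.coe_sort_coe, hC]
  exact SetLike.coe_injective ((coe_eq A hA).trans (coe_eq B hB).symm)

theorem IsCyclic.ncard_pow_eq_one_le {Q : Type*} [Group Q] [Finite Q] [IsCyclic Q] {n : ℕ}
    (hn : 0 < n) : {x : Q | x ^ n = 1}.ncard ≤ n := by
  classical
  have := Fintype.ofFinite Q
  rw [Set.ncard_eq_toFinset_card', Set.toFinset_ofFinset]
  exact IsCyclic.card_pow_eq_one_le hn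

theorem QuaternionGroup.eq_one_or_eq_of_sq_eq_one {n : ℕ} [NeZero n] {x : QuaternionGroup n}
    (hx : x ^ 2 = 1) : x = 1 ∨ x = a n := by
  cases x with
  | a i =>
    rw [sq, a_mul_a, one_def, a.injEq] at hx
    have hval : ((i.val + i.val : ℕ) : ZMod (2 * n)) = 0 := by simpa using hx
    rw [ZMod.natCast_eq_zero_iff, ← two_mul] at hval
    obtain ⟨c, hc⟩ := Nat.dvd_of_mul_dvd_mul_left two_pos hval
    have hlt := i.val_lt
    have hc2 : c < 2 := by
      by_contra! hle
      nlinarith [NeZero.pos n]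
    rw [one_def, a.injEq, a.injEq, ← ZMod.natCast_zmod_val i, hc]
    interval_cases c <;> simp
  | xa i =>
    have := orderOf_dvd_of_pow_eq_one hx
    rw [orderOf_xa] at this
    norm_num at this

theorem IsGeneralizedQuaternion.ncard_sq_eq_one_le {Q : Type*} [Group Q]
    (hQ : IsGeneralizedQuaternion Q) : {x : Q | x ^ 2 = 1}.ncard ≤ 2 := by
  obtain ⟨n, -, ⟨e⟩⟩ := hQ
  refine (Set.ncard_le_ncard (t := {1, e.symm (.a (2 ^ (n - 2) : ℕ))}) (fun x hx => ?_)
    (Set.toFinite _)).trans ((Set.ncard_insert_le _ _).trans (by simp))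
  have hex : e x ^ 2 = 1 := by rw [← map_pow, show x ^ 2 = 1 from hx, map_one]
  rcases QuaternionGroup.eq_one_or_eq_of_sq_eq_one hex with h | h
  · exact Or.inl (e.map_eq_one_iff.mp h)
  · exact Or.inr (e.eq_symm_apply.mpr h)

theorem IsGeneralizedQuaternion.eq_two_of_isPGroup {Q : Type*} [Group Q] {p : ℕ}
    (hp : p.Prime) (hQ : IsGeneralizedQuaternion Q) (hpQ : IsPGroup p Q) : p = 2 := by
  obtain ⟨n, -, ⟨e⟩⟩ := hQ
  have := Finite.of_equiv _ e.symm.toEquiv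
  have := Fact.mk hp
  obtain ⟨m, hm⟩ := IsPGroup.iff_card.mp hpQ
  rw [Nat.card_congr e.toEquiv, Nat.card_eq_fintype_card, QuaternionGroup.card] at hm
  have h2 : 2 ∣ p ^ m := hm ▸ (by norm_num : 2 ∣ 4).mul_right _
  exact ((Nat.prime_dvd_prime_iff_eq Nat.prime_two hp).mp (Nat.prime_two.dvd_of_dvd_pow h2)).symm

theorem Subgroup.prime_pow_dvd_card_inf_of_ncard_le {G : Type*} [Group G] [Finite G]
    {N : Subgroup G} [N.Normal] {p k : ℕ} [Fact p.Prime]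
    (hP : ∀ P : Sylow p G, {x : P | x ^ p ^ k = 1}.ncard ≤ p ^ k) {H : Subgroup G}
    (hH : p ^ k ∣ Nat.card H) (hN : p ^ k ∣ Nat.card N) :
    p ^ k ∣ Nat.card (H ⊓ N : Subgroup G) := by
  have exists_le : ∀ K : Subgroup G, p ^ k ∣ Nat.card K →
      ∃ A ≤ K, Nat.card A = p ^ k ∧ ∃ P : Sylow p G, A ≤ P := by
    intro K hK
    obtain ⟨A, hA⟩ := Sylow.exists_subgroup_card_pow_prime p hK
    have hcard : Nat.card (A.map K.subtype) = p ^ k := by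
      rw [Subgroup.card_map_of_injective K.subtype_injective, hA]
    exact ⟨A.map K.subtype, Subgroup.map_subtype_le A, hcard, (IsPGroup.of_card hcard).exists_le_sylow⟩
  obtain ⟨A, hAH, hA, P, hAP⟩ := exists_le H hH
  obtain ⟨B, hBN, hB, Q, hBQ⟩ := exists_le N hN
  obtain ⟨g, rfl⟩ := MulAction.exists_smul_eq G Q P
  set C := B.map (MulAut.conj g).toMonoidHom with hC_def
  have hC : Nat.card C = p ^ k := by
    rw [hC_def, Subgroup.card_map_of_injective (MulAut.conj g).injective, hB]
  have hCP : C ≤ (g • Q : Sylow p G) := Subgroup.map_mono hBQ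
  have hCN : C ≤ N := by
    rintro _ ⟨b, hb, rfl⟩
    exact Subgroup.Normal.conj_mem inferInstance b (hBN hb) g
  have hAC : A = C := by
    rw [← inf_eq_left.mpr hAP, ← inf_eq_left.mpr hCP, ← Subgroup.subgroupOf_inj]
    refine Subgroup.eq_of_ncard_pow_eq_one_le (hP _) ?_ ?_
    · exact (Nat.card_congr (Subgroup.subgroupOfEquivOfLe hAP).toEquiv).trans hA
    · exact (Nat.card_congr (Subgroup.subgroupOfEquivOfLe hCP).toEquiv).trans hC
  exact hA ▸ Subgroup.card_dvd_of_le (le_inf hAH (hAC.le.trans hCN))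

theorem Subgroup.prime_pow_dvd_card_inf_of_not_dvd_index {G : Type*} [Group G]
    {N : Subgroup G} [N.Normal] {p k : ℕ} (hp : p.Prime) (hN : ¬ p ∣ N.index)
    {H : Subgroup G} (hH : p ^ k ∣ Nat.card H) : p ^ k ∣ Nat.card (H ⊓ N : Subgroup G) := by
  have hdvd := N.relIndex_dvd_index_of_normal H
  rw [← Subgroup.card_mul_index (N.subgroupOf H)] at hH
  have hcop : Nat.Coprime (p ^ k) (N.relIndex H) :=
    ((hp.coprime_iff_not_dvd).mpr fun h => hN (h.trans hdvd)).pow_left k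
  have := hcop.dvd_of_dvd_mul_right hH
  rwa [← Subgroup.card_map_of_injective H.subtype_injective, Subgroup.subgroupOf_map_subtype,
    inf_comm] at this

theorem gcd_property_of_sylow_condition {G : Type*} [Group G] [Finite G] (N : Subgroup G)
    [N.Normal]
    (h : ∀ p : ℕ, p.Prime → p ∣ Nat.card G →
      (Nat.card N).factorization p = 0 ∨
      (Nat.card N).factorization p = (Nat.card G).factorization p ∨
      ((∀ P : Sylow p G, IsCyclic P) ∨
        ((∀ P : Sylow p G, IsGeneralizedQuaternion P) ∧ (Nat.card N).factorization 2 = 1))) :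
    ∀ H : Subgroup G, Nat.card (H ⊓ N : Subgroup G) = Nat.gcd (Nat.card H) (Nat.card N) := by
  intro H
  refine Nat.dvd_antisymm (Nat.dvd_gcd (Subgroup.card_dvd_of_le inf_le_left)
    (Subgroup.card_dvd_of_le inf_le_right)) ((Nat.dvd_iff_prime_pow_dvd_dvd _ _).mpr ?_)
  intro p k hp hpk
  obtain ⟨hH, hN⟩ := Nat.dvd_gcd_iff.mp hpk
  rcases Nat.eq_zero_or_pos k with rfl | hk
  · simp
  have := Fact.mk hp
  have hk_le := (hp.pow_dvd_iff_le_factorization Nat.card_pos.ne').mp hN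
  have hpG : p ∣ Nat.card G := (dvd_pow_self p hk.ne').trans (hN.trans N.card_subgroup_dvd_card)
  rcases h p hp hpG with h0 | hfull | hcyc | ⟨hquat, h2⟩
  · omega
  · refine Subgroup.prime_pow_dvd_card_inf_of_not_dvd_index hp (fun hdvd => ?_) hH
    rw [← N.card_mul_index, Nat.factorization_mul Nat.card_pos.ne' N.index_ne_zero_of_finite,
      Finsupp.add_apply] at hfull
    have := hp.factorization_pos_of_dvd N.index_ne_zero_of_finite hdvd
    omega
  · refine Subgroup.prime_pow_dvd_card_inf_of_ncard_le (fun P => ?_) hH hN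
    have := hcyc P
    exact IsCyclic.ncard_pow_eq_one_le (pow_pos hp.pos k)
  · obtain rfl : p = 2 := (hquat default).eq_two_of_isPGroup hp (default : Sylow p G).isPGroup'
    obtain rfl : k = 1 := by omega
    exact Subgroup.prime_pow_dvd_card_inf_of_ncard_le
      (fun P => (hquat P).ncard_sq_eq_one_le) hH hN
end

section
/- Let G be a finite group and N a normal subgroup of G such that for every subgroup H of G, |H ∩ N| = gcd(|H|, |N|). Then for each prime p dividing |G|, one of the following holds: (i) |N|_p = 1; (ii) |N|_p = |G|_p; (iii) the Sylow p-subgroups of G are cyclic, or they are generalized quaternion groups and |N|_2 = 2. -/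
open Subgroup

section Conjugation

variable {P : Type*} [Group P] {a b : P} {r : ℤ}

theorem conj_zpow_eq_zpow_mul (hab : b * a * b⁻¹ = a ^ r) (i : ℤ) :
    b * a ^ i * b⁻¹ = a ^ (r * i) := by
  rw [← conj_zpow, hab, zpow_mul]

theorem pow_conj_eq_zpow_pow (hab : b * a * b⁻¹ = a ^ r) (n : ℕ) :
    b ^ n * a * (b ^ n)⁻¹ = a ^ (r ^ n) := by
  induction n with
  | zero => simp
  | succ n ih =>
    rw [pow_succ' r, ← conj_zpow_eq_zpow_mul hab, ← ih]
    simp only [pow_succ', mul_inv_rev, mul_assoc]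

theorem zpow_mul_pow_eq_geom_sum (hab : b * a * b⁻¹ = a ^ r) (j : ℤ) (n : ℕ) :
    (a ^ j * b) ^ n = a ^ (j * ∑ i ∈ Finset.range n, r ^ i) * b ^ n := by
  induction n with
  | zero => simp
  | succ n ih =>
    have hcomm := conj_zpow_eq_zpow_mul hab (j * ∑ i ∈ Finset.range n, r ^ i)
    rw [mul_inv_eq_iff_eq_mul] at hcomm
    rw [pow_succ', ih, mul_assoc, ← mul_assoc b, hcomm, geom_sum_succ, mul_add, mul_one, add_comm,
      zpow_add, pow_succ']
    rw [mul_left_comm j]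
    simp only [mul_assoc]

/-- If `b` has its `p`-th power in `⟨a⟩ ^ p` and the norm map of `b` on `⟨a⟩` is `p` times a unit,
then `⟨a⟩ b` contains an element of exponent `p`. -/
theorem exists_zpow_mul_pow_eq_one (hab : b * a * b⁻¹ = a ^ r) {p : ℕ} {k u : ℤ}
    (hb : b ^ p = a ^ (p * k)) (hu : ∑ i ∈ Finset.range p, r ^ i = p * u)
    (hcop : IsCoprime u (orderOf a : ℤ)) : ∃ j : ℤ, (a ^ j * b) ^ p = 1 := by
  obtain ⟨s, t, hst⟩ := hcop
  refine ⟨-k * s, ?_⟩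
  rw [zpow_mul_pow_eq_geom_sum hab, hb, ← zpow_add, hu, ← orderOf_dvd_iff_zpow_eq_one]
  exact ⟨p * k * t, by linear_combination (-p * k) * hst⟩

theorem int_prime_dvd_sub_one_of_pow_sub_one {p : ℕ} (hp : p.Prime)
    (h : (p : ℤ) ∣ r ^ p - 1) : (p : ℤ) ∣ r - 1 := by
  have := Fact.mk hp
  rw [← ZMod.intCast_zmod_eq_zero_iff_dvd] at h ⊢
  simpa using h

theorem geom_sum_eq_prime_mul {p : ℕ} (hp : Odd p) (h : (p : ℤ) ∣ r - 1) :
    ∃ t : ℤ, ∑ i ∈ Finset.range p, r ^ i = p * (1 + p * t) := by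
  obtain ⟨s, hs⟩ := h
  obtain ⟨t, ht⟩ := odd_sq_dvd_geom_sum₂_sub (a := 1) (b := s) hp
  refine ⟨t, ?_⟩
  have hr : r = 1 + p * s := by linarith
  simp only [one_pow, mul_one, ← hr] at ht
  linear_combination ht

/-- Conclusions about an element `b` normalizing a cyclic `p`-subgroup `⟨a⟩` that contains all
solutions of `x ^ p = 1`. -/
theorem prime_eq_two_and_conj_eq_inv {p m : ℕ} (hp : p.Prime) (ha : orderOf a = p ^ m)
    (hU : ∀ x : P, x ^ p = 1 → x ∈ zpowers a) (hb : b ∉ zpowers a) (hab : b * a * b⁻¹ = a ^ r)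
    {k : ℤ} (hbp : b ^ p = a ^ (p * k)) :
    p = 2 ∧ 2 ≤ m ∧ b * a * b⁻¹ = a⁻¹ ∧ b ^ 2 = a ^ 2 ^ (m - 1) := by
  have hno : ∀ j : ℤ, (a ^ j * b) ^ p ≠ 1 := fun j hj =>
    hb ((mul_mem_cancel_left (zpow_mem (mem_zpowers a) j)).1 (hU _ hj))
  have hbp1 : a ^ (p * k) ≠ 1 := by simpa [hbp] using hno 0
  have hm : m ≠ 0 := by
    rintro rfl
    rw [pow_zero, orderOf_eq_one_iff] at ha
    simp [ha] at hbp1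
  have hrp : (orderOf a : ℤ) ∣ r ^ p - 1 := by
    have h1 := pow_conj_eq_zpow_pow hab p
    rw [orderOf_dvd_iff_zpow_eq_one, zpow_sub, ← h1, hbp]
    group
  have hr1 : (p : ℤ) ∣ r - 1 := by
    refine int_prime_dvd_sub_one_of_pow_sub_one hp (dvd_trans ?_ hrp)
    rw [ha]
    exact_mod_cast dvd_pow_self p hm
  have hnocop : ∀ t : ℤ, ∑ i ∈ Finset.range p, r ^ i ≠ p * (1 + p * t) := by
    intro t ht
    obtain ⟨j, hj⟩ := exists_zpow_mul_pow_eq_one hab hbp ht (by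
      rw [ha, Nat.cast_pow]
      exact IsCoprime.pow_right ⟨1, -t, by ring⟩)
    exact hno j hj
  obtain rfl | hodd := hp.eq_two_or_odd'
  · have hnot : ∀ t : ℤ, 1 + r ≠ 2 * (1 + 2 * t) := fun t ht => hnocop t (by
      simpa [Finset.sum_range_succ] using ht)
    obtain ⟨s, hs⟩ := hr1
    push_cast at hs hbp hbp1
    -- `r ≡ 3` modulo `4`
    obtain ⟨t, ht⟩ : ∃ t : ℤ, r - 1 = 2 * (2 * t + 1) := by
      obtain ⟨t, rfl | rfl⟩ := Int.even_or_odd' s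
      · exact absurd (by linarith) (hnot t)
      · exact ⟨t, hs⟩
    have hodd : IsCoprime ((2 : ℤ) ^ m) (2 * t + 1) :=
      IsCoprime.pow_left ⟨-t, 1, by ring⟩
    have ho : (orderOf a : ℤ) = 2 ^ m := by rw [ha]; push_cast; rfl
    obtain ⟨n, rfl⟩ : ∃ n, m = n + 1 := ⟨m - 1, by omega⟩
    have hhalf : ∀ x : ℤ, (2 : ℤ) ^ (n + 1) ∣ x * (2 * (2 * t + 1)) → (2 : ℤ) ^ n ∣ x := by
      intro x hx
      rw [← mul_assoc] at hx
      have := hodd.dvd_of_dvd_mul_right hx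
      rw [pow_succ] at this
      exact Int.dvd_of_mul_dvd_mul_right two_ne_zero this
    have hodd_mul : ∀ x : ℤ, (2 : ℤ) ^ n ∣ x → ¬ (2 : ℤ) ^ (n + 1) ∣ x →
        (2 : ℤ) ^ (n + 1) ∣ x - 2 ^ n := by
      rintro _ ⟨c, rfl⟩ h
      obtain ⟨d, rfl | rfl⟩ := Int.even_or_odd' c
      · exact absurd ⟨d, by ring⟩ h
      · exact ⟨d, by ring⟩
    rw [ne_eq, ← orderOf_dvd_iff_zpow_eq_one, ho] at hbp1
    rw [ho] at hrp
    have hk : (2 : ℤ) ^ n ∣ 2 * k := by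
      apply hhalf
      rw [← ho, orderOf_dvd_iff_zpow_eq_one, ← ht, mul_sub, mul_one, zpow_sub, mul_comm _ r,
        ← conj_zpow_eq_zpow_mul hab, ← hbp]
      group
    have hr : (2 : ℤ) ^ n ∣ r + 1 := by
      apply hhalf
      rw [← ht]
      convert hrp using 1
      ring
    have hk2 := hodd_mul _ hk hbp1
    have hr2 : (2 : ℤ) ^ (n + 1) ∣ r + 1 := by
      by_contra hr2
      have h3 := dvd_add (dvd_add (hodd_mul _ hr hr2) hk2) dvd_rfl
      apply hno 1
      rw [zpow_mul_pow_eq_geom_sum hab, hbp, ← zpow_add, ← orderOf_dvd_iff_zpow_eq_one, ho]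
      rwa [show 1 * ∑ i ∈ Finset.range 2, r ^ i + 2 * k =
        r + 1 - 2 ^ n + (2 * k - 2 ^ n) + 2 ^ (n + 1) by simp [Finset.sum_range_succ]; ring]
    refine ⟨rfl, ?_, ?_, ?_⟩
    · by_contra hn
      obtain rfl : n = 0 := by omega
      exact hbp1 (by simp)
    · rw [hab, ← mul_eq_one_iff_eq_inv, ← zpow_add_one, ← orderOf_dvd_iff_zpow_eq_one, ho]
      exact hr2
    · rw [hbp, Nat.add_sub_cancel, ← zpow_natCast a, ← mul_inv_eq_one, ← zpow_neg, ← zpow_add,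
        ← orderOf_dvd_iff_zpow_eq_one, ho]
      simpa [sub_eq_add_neg] using hk2
  · obtain ⟨t, ht⟩ := geom_sum_eq_prime_mul hodd hr1
    exact absurd ht (hnocop t)

end Conjugation

section PGroup

variable {P : Type*} [Group P] {p : ℕ}

theorem IsPGroup.exists_mem_center_orderOf_eq [Finite P] [Fact p.Prime] (hP : IsPGroup p P)
    {K : Subgroup P} [K.Normal] (hK : K ≠ ⊥) : ∃ z ∈ K, z ∈ center P ∧ orderOf z = p := by
  have hdvd : p ∣ Nat.card K := (hP.to_subgroup K).card_eq_or_dvd.resolve_left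
    (mt K.eq_bot_of_card_eq hK)
  obtain ⟨x, hx, hx1⟩ := (hP.of_equiv
    ConjAct.toConjAct).exists_fixed_point_of_prime_dvd_card_of_fixed_point K hdvd
    (a := 1) (fun g => smul_one g)
  have hxc : (x : P) ∈ K ⊓ center P := by
    refine ⟨x.2, mem_center_iff.2 fun g => ?_⟩
    have := congrArg Subtype.val (hx (ConjAct.toConjAct g))
    rwa [ConjAct.Subgroup.val_conj_smul, ConjAct.toConjAct_smul, mul_inv_eq_iff_eq_mul] at this
  have hne : K ⊓ center P ≠ ⊥ := fun h => by
    rw [h, mem_bot] at hxc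
    exact hx1 (Subtype.ext hxc.symm)
  obtain ⟨z, hz⟩ := exists_prime_orderOf_dvd_card' (G := (K ⊓ center P : Subgroup P)) p
    ((hP.to_subgroup _).card_eq_or_dvd.resolve_left (mt (eq_bot_of_card_eq _) hne))
  exact ⟨z, z.2.1, z.2.2, by rwa [orderOf_coe]⟩

theorem IsPGroup.mem_zpowers_or_exists_pow_eq [Fact p.Prime] (hP : IsPGroup p P) {a b : P}
    (h : b ^ p ∈ zpowers a) : a ∈ zpowers b ∨ ∃ k : ℤ, b ^ p = a ^ (p * k) := by
  obtain ⟨j, hj⟩ := mem_zpowers_iff.1 h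
  by_cases hpj : (p : ℤ) ∣ j
  · obtain ⟨k, rfl⟩ := hpj
    exact .inr ⟨k, hj.symm⟩
  · left
    obtain ⟨m, hm⟩ := IsPGroup.iff_orderOf.1 hP a
    have : a ∈ zpowers (a ^ j) := by
      rw [mem_zpowers_zpow_iff, hm, Int.gcd_comm, ← Int.isCoprime_iff_gcd_eq_one, Nat.cast_pow]
      exact IsCoprime.pow_left
        ((Nat.prime_iff_prime_int.1 Fact.out).coprime_iff_not_dvd.2 hpj)
    rw [hj] at this
    exact (zpowers_le.2 (pow_mem (mem_zpowers b) p)) this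

theorem IsPGroup.mem_zpowers_of_pow_eq_one [Fact p.Prime] (hP : IsPGroup p P)
    (hU : ∀ x y : P, orderOf x = p → orderOf y = p → y ∈ zpowers x) {a x : P} (ha : a ≠ 1)
    (hx : x ^ p = 1) : x ∈ zpowers a := by
  by_cases hx1 : x = 1
  · simp [hx1]
  have ho : orderOf (a ^ (orderOf a / p)) = p :=
    orderOf_pow_orderOf_div (orderOf_pos_iff.2 (hP.isOfFinOrder (Fact.out : p.Prime).ne_zero a)).ne'
      (hP.dvd_orderOf ha)
  exact zpowers_le.2 (pow_mem (mem_zpowers a) _) (hU _ _ ho (orderOf_eq_prime hx hx1))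

theorem exists_conj_eq_zpow_of_normal_zpowers {a : P} [h : (zpowers a).Normal] (b : P) :
    ∃ r : ℤ, b * a * b⁻¹ = a ^ r := by
  obtain ⟨r, hr⟩ := mem_zpowers_iff.1 (h.conj_mem a (mem_zpowers a) b)
  exact ⟨r, hr.symm⟩

/-- A finite `p`-group with at most one subgroup of order `p` has a normal cyclic subgroup that
is its own centralizer. -/
theorem IsPGroup.exists_zpowers_normal_centralizer_le [Finite P] [Fact p.Prime]
    (hP : IsPGroup p P) (hU : ∀ x y : P, orderOf x = p → orderOf y = p → y ∈ zpowers x) :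
    ∃ a : P, (zpowers a).Normal ∧ centralizer {a} ≤ zpowers a := by
  obtain ⟨a, hmax⟩ := (Set.toFinite {a : P | (zpowers a).Normal}).exists_maximalFor
    (fun a => zpowers a) _ ⟨1, by simp only [Set.mem_ofPred_eq, zpowers_one_eq_bot]; infer_instance⟩
  have hn : (zpowers a).Normal := hmax.1
  refine ⟨a, hn, fun c hc => ?_⟩
  by_contra hca
  have hcent : centralizer (zpowers a : Set P) = centralizer {a} := by
    rw [zpowers_eq_closure, centralizer_closure]
  have : (centralizer {a}).Normal := hcent ▸ inferInstance
  have hK : ((centralizer {a}).map (QuotientGroup.mk' (zpowers a))).Normal :=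
    this.map _ (QuotientGroup.mk'_surjective _)
  obtain ⟨z, ⟨b, hbc, rfl⟩, hz, hzo⟩ := (hP.to_quotient (zpowers a)).exists_mem_center_orderOf_eq
    (K := (centralizer {a}).map (QuotientGroup.mk' (zpowers a))) (fun h => hca (by
      have := mem_map_of_mem (QuotientGroup.mk' (zpowers a)) hc
      rwa [h, mem_bot, QuotientGroup.mk'_apply, QuotientGroup.eq_one_iff] at this))
  have hba : b ∉ zpowers a := fun h => by
    rw [QuotientGroup.mk'_apply, (QuotientGroup.eq_one_iff b).2 h, orderOf_one] at hzo
    exact (Fact.out : p.Prime).one_lt.ne hzo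
  have hbp : b ^ p ∈ zpowers a := by
    rw [← QuotientGroup.eq_one_iff, QuotientGroup.mk_pow, ← QuotientGroup.mk'_apply, ← hzo,
      pow_orderOf_eq_one]
  have hlarge : a ∉ zpowers b := by
    intro hab
    have hle : zpowers a ≤ zpowers b := zpowers_le.2 hab
    have hbn : (zpowers b).Normal := by
      have : ∀ g : P, g * b * g⁻¹ ∈ zpowers b := fun g => by
        have h1 := mem_center_iff.1 hz (QuotientGroup.mk' (zpowers a) g)
        rw [← mul_inv_eq_iff_eq_mul, ← map_mul, ← map_inv, ← map_mul, ← mul_inv_eq_one,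
          ← map_inv, ← map_mul, QuotientGroup.mk'_apply, QuotientGroup.eq_one_iff] at h1
        exact (mul_mem_cancel_right (inv_mem (mem_zpowers b))).1 (hle h1)
      refine ⟨fun x hx g => ?_⟩
      obtain ⟨i, rfl⟩ := mem_zpowers_iff.1 hx
      rw [← conj_zpow]
      exact zpow_mem (this g) i
    exact hba (hmax.2 hbn hle (mem_zpowers b))
  have ha : a ≠ 1 := fun h => hlarge (h ▸ one_mem _)
  obtain ⟨k, hk⟩ := (hP.mem_zpowers_or_exists_pow_eq hbp).resolve_left hlarge
  obtain ⟨m, hm⟩ := IsPGroup.iff_orderOf.1 hP a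
  have hcomm : b * a * b⁻¹ = a := by
    rw [mul_inv_eq_iff_eq_mul, mem_centralizer_singleton_iff.1 hbc]
  obtain ⟨rfl, hm2, hinv, -⟩ := prime_eq_two_and_conj_eq_inv Fact.out hm
    (fun x hx => hP.mem_zpowers_of_pow_eq_one hU ha hx) hba (r := 1) (by simpa using hcomm) hk
  have hdvd : 2 ^ m ∣ 2 := by
    rw [← hm, orderOf_dvd_iff_pow_eq_one, pow_two, ← eq_inv_iff_mul_eq_one, ← hinv, hcomm]
  have := Nat.le_of_dvd two_pos ((pow_dvd_pow 2 hm2).trans hdvd)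
  omega

/-- A group with elements `a`, `b` satisfying the relations of the dicyclic group, with `a` of order
`2 * n` and such that every element is in `⟨a⟩` or `b⟨a⟩`, is dicyclic. -/
theorem nonempty_mulEquiv_quaternionGroup {n : ℕ} {a b : P} (ha : orderOf a = 2 * n)
    (hab : b * a * b⁻¹ = a⁻¹) (hb2 : b ^ 2 = a ^ n) (hb : b ∉ zpowers a)
    (hcover : ∀ c, c ∉ zpowers a → b⁻¹ * c ∈ zpowers a) :
    Nonempty (P ≃* QuaternionGroup n) := by
  obtain ⟨g, hg⟩ : ∃ g : ZMod (2 * n) → P, ∀ i : ℤ, g i = a ^ i := by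
    refine ⟨fun i => (ZMod.lift (2 * n) ⟨zmultiplesHom (Additive P) (Additive.ofMul a), ?_⟩ i).toMul,
      fun i => ?_⟩
    · simp [← ha, ← ofMul_pow, pow_orderOf_eq_one]
    · simp
  have hg' : ∀ i : ℤ, a ^ i * b = b * a ^ (-i) := fun i => by
    have := conj_zpow_eq_zpow_mul (a := a) (b := b) (r := -1) (by simpa using hab) (-i)
    rw [mul_inv_eq_iff_eq_mul] at this
    rw [this]
    simp
  have hginj : ∀ i j : ℤ, a ^ i = a ^ j → (i : ZMod (2 * n)) = j := fun i j h => by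
    rw [zpow_eq_zpow_iff_modEq, ha] at h
    exact (ZMod.intCast_eq_intCast_iff _ _ _).2 h
  have hmem : ∀ i : ℤ, a ^ i ∈ zpowers a := fun i => zpow_mem (mem_zpowers a) i
  let f : QuaternionGroup n → P
    | .a i => g i
    | .xa i => b * g i
  have hmul : ∀ x y, f (x * y) = f x * f y := by
    rintro (i | i) (j | j) <;> obtain ⟨i, rfl⟩ := ZMod.intCast_surjective i <;>
      obtain ⟨j, rfl⟩ := ZMod.intCast_surjective j
    · simp only [QuaternionGroup.a_mul_a, f]
      rw [← Int.cast_add, hg, hg, hg, zpow_add]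
    · simp only [QuaternionGroup.a_mul_xa, f]
      rw [← Int.cast_sub, hg, hg, hg, ← mul_assoc, hg', mul_assoc, ← zpow_add, neg_add_eq_sub]
    · simp only [QuaternionGroup.xa_mul_a, f]
      rw [← Int.cast_add, hg, hg, hg, zpow_add, mul_assoc]
    · simp only [QuaternionGroup.xa_mul_xa, f]
      rw [← Int.cast_natCast, ← Int.cast_add, ← Int.cast_sub, hg, hg, hg, mul_assoc, ← mul_assoc _ b,
        hg', ← mul_assoc, ← mul_assoc, ← pow_two, hb2, ← zpow_natCast, ← zpow_add, ← zpow_add]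
      congr 1
      ring
  have hinj : Function.Injective f := by
    rintro (i | i) (j | j) h <;> obtain ⟨i, rfl⟩ := ZMod.intCast_surjective i <;>
      obtain ⟨j, rfl⟩ := ZMod.intCast_surjective j <;> simp only [f, hg] at h
    · rw [hginj i j h]
    · exact absurd ((mul_mem_cancel_right (hmem j)).1 (h ▸ hmem i)) hb
    · exact absurd ((mul_mem_cancel_right (hmem i)).1 (h ▸ hmem j)) hb
    · rw [hginj i j (mul_left_cancel h)]
  have hsurj : Function.Surjective f := by
    intro c
    by_cases hc : c ∈ zpowers a
    · obtain ⟨i, rfl⟩ := mem_zpowers_iff.1 hc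
      exact ⟨.a i, hg i⟩
    · obtain ⟨i, hi⟩ := mem_zpowers_iff.1 (hcover c hc)
      exact ⟨.xa i, by simp only [f, hg, hi, mul_inv_cancel_left]⟩
  exact ⟨(MulEquiv.ofBijective (MulHom.mk f hmul) ⟨hinj, hsurj⟩).symm⟩

/-- A finite `p`-group with at most one subgroup of order `p` is cyclic or generalized
quaternion. -/
theorem IsPGroup.isCyclic_or_isGeneralizedQuaternion [Finite P] [hp : Fact p.Prime]
    (hP : IsPGroup p P) (hU : ∀ x y : P, orderOf x = p → orderOf y = p → y ∈ zpowers x) :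
    IsCyclic P ∨ (p = 2 ∧ IsGeneralizedQuaternion P) := by
  obtain ⟨a, hn, hcent⟩ := hP.exists_zpowers_normal_centralizer_le hU
  by_cases htop : ∀ c, c ∈ zpowers a
  · exact .inl ⟨a, htop⟩
  obtain ⟨m, hm⟩ := IsPGroup.iff_orderOf.1 hP a
  have ha : a ≠ 1 := by
    rintro rfl
    exact htop fun c => hcent (mem_centralizer_singleton_iff.2 (by simp))
  have hcore : ∀ b, b ∉ zpowers a → b ^ p ∈ zpowers a →
      p = 2 ∧ 2 ≤ m ∧ b * a * b⁻¹ = a⁻¹ ∧ b ^ 2 = a ^ 2 ^ (m - 1) := by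
    intro b hb hbp
    obtain ⟨r, hr⟩ := exists_conj_eq_zpow_of_normal_zpowers (a := a) b
    have hab : a ∉ zpowers b := fun h => hb <| hcent <| mem_centralizer_singleton_iff.2 <| by
      obtain ⟨i, rfl⟩ := mem_zpowers_iff.1 h
      exact (Commute.refl b).zpow_right i
    obtain ⟨k, hk⟩ := (hP.mem_zpowers_or_exists_pow_eq hbp).resolve_left hab
    exact prime_eq_two_and_conj_eq_inv hp.out hm
      (fun x hx => hP.mem_zpowers_of_pow_eq_one hU ha hx) hb hr hk
  have hsq : ∀ b, b ^ p ^ 2 ∈ zpowers a → b ^ p ∈ zpowers a := by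
    intro b hb
    by_contra hbp
    obtain ⟨rfl, hm2, hinv, -⟩ := hcore _ hbp (by rwa [← pow_mul, ← pow_two])
    obtain ⟨r, hr⟩ := exists_conj_eq_zpow_of_normal_zpowers (a := a) b
    rw [pow_conj_eq_zpow_pow hr, ← mul_eq_one_iff_eq_inv, ← zpow_add_one,
      ← orderOf_dvd_iff_zpow_eq_one, hm] at hinv
    have h4 : (4 : ℤ) ∣ r ^ 2 + 1 := dvd_trans (by exact_mod_cast pow_dvd_pow 2 hm2) hinv
    obtain ⟨t, rfl | rfl⟩ := Int.even_or_odd' r <;> ring_nf at h4 <;> omega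
  have hpow : ∀ b, b ^ p ∈ zpowers a := by
    have : ∀ k : ℕ, ∀ b : P, b ^ p ^ k ∈ zpowers a → b ^ p ∈ zpowers a := by
      intro k
      induction k with
      | zero => exact fun b hb => pow_mem (by simpa using hb) p
      | succ k ih => exact fun b hb => hsq b (by
          rw [pow_two, pow_mul]
          exact ih _ (by rwa [← pow_mul, ← pow_succ']))
    intro b
    obtain ⟨k, hk⟩ := isPGroup_iff_pow_pow_eq_one.1 hP b
    exact this k b (hk ▸ one_mem _)
  push Not at htop
  obtain ⟨b, hb⟩ := htop
  obtain ⟨rfl, hm2, hinv, hb2⟩ := hcore b hb (hpow b)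
  refine .inr ⟨rfl, m + 1, by omega, ?_⟩
  refine nonempty_mulEquiv_quaternionGroup (b := b) ?_ hinv hb2 hb fun c hc => ?_
  · rw [hm, ← pow_succ']
    congr 1
    omega
  · obtain ⟨-, -, hcinv, -⟩ := hcore c hc (hpow c)
    refine hcent (mem_centralizer_singleton_iff.2 ?_)
    rw [← hinv, mul_inv_eq_iff_eq_mul] at hcinv
    rw [mul_assoc, hcinv]
    group

theorem mem_zpowers_of_orderOf_eq {c x y : P} (hc : IsOfFinOrder c) (hx : x ∈ zpowers c)
    (hy : y ∈ zpowers c) (hxy : orderOf x = orderOf y) : y ∈ zpowers x := by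
  have hcpos : 0 < orderOf c := hc.orderOf_pos
  have hfin : Finite (zpowers c) := Nat.finite_of_card_ne_zero (by rw [Nat.card_zpowers]; omega)
  have hdvd : orderOf x ∣ orderOf c := by
    simpa using card_dvd_of_le (zpowers_le.2 hx)
  obtain ⟨d, hd⟩ := hdvd
  have hd0 : (orderOf x : ℤ) ≠ 0 := by
    rintro h
    rw [Nat.cast_eq_zero.1 h, zero_mul] at hd
    omega
  have hle : ∀ z ∈ zpowers c, orderOf z = orderOf x → z ∈ zpowers (c ^ d) := by
    intro z hz hzx
    obtain ⟨i, rfl⟩ := mem_zpowers_iff.1 hz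
    have h1 : (c ^ i) ^ orderOf x = 1 := by rw [← hzx, pow_orderOf_eq_one]
    rw [← zpow_natCast, ← zpow_mul, ← orderOf_dvd_iff_zpow_eq_one, hd, Nat.cast_mul, mul_comm i,
      mul_dvd_mul_iff_left hd0] at h1
    obtain ⟨t, rfl⟩ := h1
    rw [zpow_mul, zpow_natCast]
    exact zpow_mem (mem_zpowers _) t
  have hfin' : Finite (zpowers (c ^ d)) :=
    Finite.Set.subset _ (zpowers_le.2 (pow_mem (mem_zpowers c) d))
  have hcard : Nat.card (zpowers (c ^ d)) ≤ Nat.card (zpowers x) := by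
    rw [Nat.card_zpowers, Nat.card_zpowers]
    refine orderOf_le_of_pow_eq_one (by omega) ?_
    rw [← pow_mul, mul_comm, ← hd, pow_orderOf_eq_one]
  rw [eq_of_le_of_card_ge (zpowers_le.2 (hle x hx rfl)) hcard]
  exact hle y hy hxy.symm

/-- A finite `p`-group with a proper nontrivial subgroup comparable with every subgroup is cyclic
or generalized quaternion, and in the second case the subgroup has order two. -/
theorem IsPGroup.isCyclic_or_isGeneralizedQuaternion_of_comparable [Finite P] [hp : Fact p.Prime]
    (hP : IsPGroup p P) {M : Subgroup P} (hbot : M ≠ ⊥) (htop : M ≠ ⊤)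
    (hM : ∀ H : Subgroup P, H ≤ M ∨ M ≤ H) :
    IsCyclic P ∨ (p = 2 ∧ IsGeneralizedQuaternion P ∧ Nat.card M = 2) := by
  obtain ⟨c, hc⟩ : ∃ c, c ∉ M := by
    by_contra! h
    exact htop (eq_top_iff.2 fun x _ => h x)
  have hMc : M ≤ zpowers c := (hM (zpowers c)).resolve_left fun h => hc (h (mem_zpowers c))
  have hmem : ∀ x : P, orderOf x = p → x ∈ M := by
    intro x hx
    refine (hM (zpowers x)).elim (fun h => h (mem_zpowers x)) fun h => ?_
    have hdvd := card_dvd_of_le h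
    rw [Nat.card_zpowers, hx, Nat.dvd_prime hp.out] at hdvd
    rw [eq_of_le_of_card_ge h
      (by rw [Nat.card_zpowers, hx, hdvd.resolve_left (mt M.eq_bot_of_card_eq hbot)])]
    exact mem_zpowers x
  have hU : ∀ x y : P, orderOf x = p → orderOf y = p → y ∈ zpowers x := by
    intro x y hx hy
    exact mem_zpowers_of_orderOf_eq (isOfFinOrder_of_finite c) (hMc (hmem x hx))
      (hMc (hmem y hy)) (hx.trans hy.symm)
  refine (hP.isCyclic_or_isGeneralizedQuaternion hU).imp_right ?_
  rintro ⟨rfl, n, hn, ⟨e⟩⟩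
  refine ⟨rfl, ⟨n, hn, ⟨e⟩⟩, ?_⟩
  by_contra hcard
  have : NeZero (2 ^ (n - 2)) := ⟨by positivity⟩
  obtain ⟨k, hk⟩ := IsPGroup.iff_card.1 (hP.to_subgroup M)
  have h4 : 4 ≤ Nat.card M := by
    have h0 : k ≠ 0 := by
      rintro rfl
      exact hbot (M.eq_bot_of_card_eq hk)
    have h1 : k ≠ 1 := by
      rintro rfl
      exact hcard hk
    rw [hk]
    exact Nat.pow_le_pow_right two_pos (by omega : 2 ≤ k)
  have hxa : ∀ i, e.symm (.xa i) ∈ M := by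
    intro i
    have ho : orderOf (e.symm (.xa i)) = 4 := by
      rw [MulEquiv.orderOf_eq, QuaternionGroup.orderOf_xa]
    refine (hM (zpowers (e.symm (.xa i)))).elim (fun h => h (mem_zpowers _)) fun h => ?_
    rw [eq_of_le_of_card_ge h (by rwa [Nat.card_zpowers, ho])]
    exact mem_zpowers _
  apply hc
  rw [← e.symm_apply_apply c]
  obtain i | i := e c
  · have : (QuaternionGroup.a i : QuaternionGroup (2 ^ (n - 2))) = (.xa 0)⁻¹ * .xa i := by
      rw [eq_inv_mul_iff_mul_eq]
      simp
    rw [this, map_mul, map_inv]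
    exact mul_mem (inv_mem (hxa 0)) (hxa i)
  · exact hxa i

end PGroup

theorem card_inf_eq_pow_factorization {G : Type*} [Group G] [Finite G] {N : Subgroup G} {p : ℕ}
    [Fact p.Prime] (P : Sylow p G)
    (h : Nat.card (P ⊓ N : Subgroup G) = Nat.gcd (Nat.card P) (Nat.card N)) :
    Nat.card (P ⊓ N : Subgroup G) = p ^ (Nat.card N).factorization p := by
  have hle : (Nat.card N).factorization p ≤ (Nat.card G).factorization p :=
    (Nat.factorization_le_iff_dvd Nat.card_pos.ne' Nat.card_pos.ne').2
      (card_subgroup_dvd_card N) p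
  rw [h, P.card_eq_multiplicity]
  apply Nat.dvd_antisymm
  · obtain ⟨k, -, hk⟩ := (Nat.dvd_prime_pow Fact.out).1
      (Nat.gcd_dvd_left (p ^ (Nat.card G).factorization p) (Nat.card N))
    rw [hk]
    exact pow_dvd_pow p (((Fact.out : p.Prime).pow_dvd_iff_le_factorization Nat.card_pos.ne').1
      (hk ▸ Nat.gcd_dvd_right _ _))
  · exact Nat.dvd_gcd (pow_dvd_pow p hle) (Nat.ordProj_dvd _ _)

theorem le_or_inf_le_of_card_inf_eq_gcd {G : Type*} [Group G] [Finite G] {N : Subgroup G} {p : ℕ}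
    [Fact p.Prime] (P : Sylow p G)
    (h : ∀ H : Subgroup G, Nat.card (H ⊓ N : Subgroup G) = Nat.gcd (Nat.card H) (Nat.card N))
    {H : Subgroup G} (hHP : H ≤ P) : H ≤ N ∨ (P ⊓ N : Subgroup G) ≤ H := by
  obtain ⟨k, hk⟩ := IsPGroup.iff_card.1 (P.2.to_le hHP)
  have hPN := card_inf_eq_pow_factorization P (h P)
  obtain hle | hle := le_total k ((Nat.card N).factorization p)
  · left
    have hdvd : Nat.card H ∣ Nat.card N := hk ▸ (pow_dvd_pow p hle).trans (Nat.ordProj_dvd _ _)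
    rw [← inf_eq_left]
    exact eq_of_le_of_card_ge inf_le_left (by rw [h, Nat.gcd_eq_left hdvd])
  · right
    have hge : Nat.card (P ⊓ N : Subgroup G) ≤ Nat.card (H ⊓ N : Subgroup G) := by
      rw [h H, hPN]
      exact Nat.le_of_dvd (Nat.gcd_pos_of_pos_left _ Nat.card_pos)
        (Nat.dvd_gcd (hk ▸ pow_dvd_pow p hle) (Nat.ordProj_dvd _ _))
    rw [← eq_of_le_of_card_ge (inf_le_inf_right N hHP) hge]
    exact inf_le_left

theorem sylow_condition_of_gcd_property {G : Type*} [Group G] [Finite G] (N : Subgroup G)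
    [N.Normal]
    (h : ∀ H : Subgroup G, Nat.card (H ⊓ N : Subgroup G) = Nat.gcd (Nat.card H) (Nat.card N)) :
    ∀ p : ℕ, p.Prime → p ∣ Nat.card G →
      (Nat.card N).factorization p = 0 ∨
      (Nat.card N).factorization p = (Nat.card G).factorization p ∨
      ((∀ P : Sylow p G, IsCyclic P) ∨
        ((∀ P : Sylow p G, IsGeneralizedQuaternion P) ∧ (Nat.card N).factorization 2 = 1)) := by
  intro p hp _
  have := Fact.mk hp
  by_cases h0 : (Nat.card N).factorization p = 0
  · exact .inl h0
  by_cases h1 : (Nat.card N).factorization p = (Nat.card G).factorization p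
  · exact .inr (.inl h1)
  refine .inr (.inr ?_)
  have hall : ∀ P : Sylow p G, IsCyclic P ∨
      (IsGeneralizedQuaternion P ∧ (Nat.card N).factorization 2 = 1) := by
    intro P
    have hcard : Nat.card (N.subgroupOf P) = p ^ (Nat.card N).factorization p := by
      rw [← card_inf_eq_pow_factorization P (h P), ← inf_subgroupOf_left,
        Nat.card_congr (subgroupOfEquivOfLe inf_le_left).toEquiv]
    have hinj := Nat.pow_right_injective hp.two_le
    have hbot : N.subgroupOf P ≠ ⊥ := fun hb => h0 (hinj (by
      simp only [← hcard, hb, card_bot, pow_zero]))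
    have htop : N.subgroupOf P ≠ ⊤ := fun ht => h1 (hinj (by
      simp only [← hcard, ht, card_top, P.card_eq_multiplicity]))
    refine (P.2.isCyclic_or_isGeneralizedQuaternion_of_comparable hbot htop fun H => ?_).imp_right ?_
    · refine (le_or_inf_le_of_card_inf_eq_gcd P h (map_subtype_le H)).imp (fun hH x hx => ?_)
        fun hH x hx => ?_
      · exact hH (mem_map_of_mem _ hx)
      · exact (mem_map_iff_mem (subtype_injective _)).1 (hH ⟨x.2, hx⟩)
    · rintro ⟨rfl, hQ, h2⟩
      exact ⟨hQ, hinj (by simp only [← hcard, h2, pow_one])⟩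
  by_cases hcyc : ∀ P : Sylow p G, IsCyclic P
  · exact .inl hcyc
  · push Not at hcyc
    obtain ⟨P, hP⟩ := hcyc
    obtain ⟨⟨n, hn, ⟨e⟩⟩, h2⟩ := (hall P).resolve_left hP
    exact .inr ⟨fun Q => ⟨n, hn, ⟨(Sylow.equiv Q P).trans e⟩⟩, h2⟩
end

section
/- Let p be a prime and Q a group of order p^n. Suppose that for some integer k with 0 < k < n, Q contains a unique subgroup of order p^k. Then Q is either cyclic or a generalized quaternion group; moreover, if Q is a generalized quaternion group and not cyclic, then p^k = 2. -/
open Subgroup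
open scoped commutatorElement

/-- A normal subgroup of a nilpotent group not contained in `A` has an element outside `A` which is
central modulo `A`. -/
theorem Subgroup.exists_mem_notMem_forall_commutatorElement_mem {G : Type*} [Group G]
    [Group.IsNilpotent G] {A C : Subgroup G} [C.Normal] (h : ¬ C ≤ A) :
    ∃ x ∈ C, x ∉ A ∧ ∀ g : G, ⁅x, g⁆ ∈ A := by
  classical
  have hex : ∃ i, C ⊓ (⊤ : Subgroup G).lowerCentralSeries i ≤ A := by
    obtain ⟨i, hi⟩ := nilpotent_iff_lowerCentralSeries.mp ‹Group.IsNilpotent G›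
    exact ⟨i, by simp [hi]⟩
  obtain ⟨i, hi⟩ : ∃ i, Nat.find hex = i + 1 := by
    refine Nat.exists_eq_succ_of_ne_zero fun h0 => h ?_
    simpa [h0] using Nat.find_spec hex
  have hsucc := Nat.find_spec hex
  rw [hi] at hsucc
  obtain ⟨x, ⟨hxC, hxi⟩, hxA⟩ := SetLike.not_le_iff_exists.mp (Nat.find_min hex (m := i) (by omega))
  refine ⟨x, hxC, hxA, fun g => hsucc ⟨?_, ?_⟩⟩
  · rw [commutatorElement_def, mul_assoc, mul_assoc, ← mul_assoc g]
    exact C.mul_mem hxC (‹C.Normal›.conj_mem _ (C.inv_mem hxC) g)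
  · exact commutator_mem_commutator hxi (mem_top g)

/-- In a nilpotent group, a maximal commutative normal subgroup is self-centralizing. -/
theorem Subgroup.centralizer_le_of_maximal {G : Type*} [Group G] [Group.IsNilpotent G]
    {A : Subgroup G} (hA : Maximal (fun B : Subgroup G => B.Normal ∧ IsMulCommutative B) A) :
    centralizer (A : Set G) ≤ A := by
  have := hA.prop.1
  have hAc := hA.prop.2
  by_contra h
  obtain ⟨x, hxC, hxA, hx⟩ := exists_mem_notMem_forall_commutatorElement_mem h
  rw [mem_centralizer_iff] at hxC
  have hAK : A ≤ closure (insert x (A : Set G)) :=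
    fun a ha => subset_closure (Set.mem_insert_of_mem _ ha)
  have hxK : x ∈ closure (insert x (A : Set G)) := subset_closure (Set.mem_insert _ _)
  refine hxA (hA.le_of_ge ⟨?_, ?_⟩ hAK hxK)
  · refine ⟨fun y hy g => ?_⟩
    suffices closure (insert x (A : Set G)) ≤
        (closure (insert x (A : Set G))).comap (MulAut.conj g).toMonoidHom from this hy
    rw [closure_le]
    rintro y (rfl | hy)
    · have h1 := mul_mem (inv_mem (hAK (hx g))) hxK
      simpa [commutatorElement_def, mul_assoc] using h1
    · exact hAK (this.conj_mem y hy g)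
  · refine isMulCommutative_closure ?_
    rintro a (rfl | ha) b (rfl | hb)
    · rfl
    · exact (hxC b hb).symm
    · exact hxC a ha
    · exact setLike_mul_comm ha hb

theorem IsPGroup.exists_pow_notMem_pow_prime_mem {G : Type*} [Group G] {p : ℕ} (hG : IsPGroup p G)
    {A : Subgroup G} {y : G} (hy : y ∉ A) : ∃ j : ℕ, y ^ j ∉ A ∧ (y ^ j) ^ p ∈ A := by
  classical
  have hex : ∃ k, y ^ p ^ k ∈ A := by
    obtain ⟨k, hk⟩ := isPGroup_iff_pow_pow_eq_one.mp hG y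
    exact ⟨k, hk ▸ A.one_mem⟩
  obtain ⟨k, hk⟩ : ∃ k, Nat.find hex = k + 1 := by
    refine Nat.exists_eq_succ_of_ne_zero fun h0 => hy ?_
    simpa [h0] using Nat.find_spec hex
  have hsucc := Nat.find_spec hex
  rw [hk, pow_succ, pow_mul] at hsucc
  exact ⟨p ^ k, Nat.find_min hex (by omega), hsucc⟩

/-- If every nontrivial cyclic subgroup of a finite `p`-group contains all elements of order `p`,
then the commutative subgroups are cyclic. -/
theorem IsPGroup.exists_eq_zpowers {G : Type*} [Group G] [Finite G] {p : ℕ} (hp : p.Prime)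
    (hG : IsPGroup p G) (hU : ∀ g : G, g ≠ 1 → ∀ y : G, y ^ p = 1 → y ∈ zpowers g)
    (A : Subgroup G) [IsMulCommutative A] : ∃ g, A = zpowers g := by
  have : Fact p.Prime := ⟨hp⟩
  obtain ⟨g, hgA, hg⟩ := Set.exists_max_image (A : Set G) orderOf (Set.toFinite _) ⟨1, A.one_mem⟩
  refine ⟨g, le_antisymm (fun y hyA => ?_) (zpowers_le.mpr hgA)⟩
  by_contra hy
  obtain ⟨j, hj, hjp⟩ := hG.exists_pow_notMem_pow_prime_mem hy
  have hxA : y ^ j ∈ A := A.pow_mem hyA j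
  generalize y ^ j = x at hj hjp hxA
  have hx1 : x ≠ 1 := fun h => hj (h ▸ one_mem _)
  have hg1 : g ≠ 1 := by
    rintro rfl
    have := hg x hxA
    rw [orderOf_one] at this
    exact hx1 (orderOf_eq_one_iff.mp (le_antisymm this (orderOf_pos x)))
  obtain ⟨t, ht⟩ := mem_powers_iff_mem_zpowers.mpr hjp
  simp only at ht
  by_cases hpt : p ∣ t
  · obtain ⟨u, rfl⟩ := hpt
    have hcomm : Commute (g ^ u)⁻¹ x :=
      setLike_mul_comm (A.inv_mem (A.pow_mem hgA u)) hxA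
    have h1 : ((g ^ u)⁻¹ * x) ^ p = 1 := by
      rw [hcomm.mul_pow, ← ht, inv_pow, ← pow_mul, mul_comm u, inv_mul_cancel]
    have h2 := hU g hg1 _ h1
    exact hj ((mul_mem_cancel_left (inv_mem (pow_mem (mem_zpowers g) u))).mp h2)
  · have h1 : orderOf (x ^ p) = orderOf g := by
      rw [← ht]
      refine Nat.Coprime.orderOf_pow ?_
      obtain ⟨e, he⟩ := (IsPGroup.iff_orderOf.mp hG) g
      rw [he]
      exact Nat.Coprime.pow_left _ ((Nat.Prime.coprime_iff_not_dvd hp).mpr hpt)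
    have h2 : orderOf (x ^ p) = orderOf x / p := orderOf_pow_of_dvd hp.ne_zero (hG.dvd_orderOf hx1)
    have h3 := Nat.div_lt_self (orderOf_pos x) hp.one_lt
    have := hg x hxA
    omega

/-- The arithmetic of an extension of a cyclic group of order `p ^ m` by a group of order `p` which
acts nontrivially, through `r`, and has no complement. -/
theorem eq_two_and_dvd_of_forall_not_dvd {p m : ℕ} (hp : p.Prime) {r t : ℤ}
    (hr : (p : ℤ) ^ m ∣ r ^ p - 1) (hrt : (p : ℤ) ^ m ∣ t * (r - 1)) (hr1 : ¬ (p : ℤ) ^ m ∣ r - 1)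
    (hS : ∀ i : ℤ, ¬ (p : ℤ) ^ m ∣ i * (∑ j ∈ Finset.range p, r ^ j) + t) :
    p = 2 ∧ 2 ≤ m ∧ (2 : ℤ) ^ m ∣ r + 1 ∧ (2 : ℤ) ^ m ∣ t - 2 ^ (m - 1) := by
  have : Fact p.Prime := ⟨hp⟩
  have hpi : Prime (p : ℤ) := Nat.prime_iff_prime_int.mp hp
  have hm : m ≠ 0 := by rintro rfl; simp at hr1
  have hpr : (p : ℤ) ∣ r - 1 := by
    have h1 : (p : ℤ) ∣ r ^ p - 1 := (dvd_pow_self _ hm).trans hr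
    have h2 := (ZMod.intCast_zmod_eq_zero_iff_dvd _ p).mpr h1
    rw [← ZMod.intCast_zmod_eq_zero_iff_dvd]
    push_cast at h2 ⊢
    rwa [ZMod.pow_card] at h2
  have hpt : (p : ℤ) ∣ t := by
    by_contra h
    exact hr1 (((hpi.coprime_iff_not_dvd.mpr h).pow_left).dvd_of_dvd_mul_left hrt)
  -- a sum which is `p` times a unit modulo `p ^ m` is excluded by `hS`
  have key : ∀ c : ℤ, ¬ (p : ℤ) ∣ c → (∑ j ∈ Finset.range p, r ^ j) ≠ p * c := by
    intro c hc h
    obtain ⟨u, rfl⟩ := hpt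
    obtain ⟨a, b, hab⟩ := (hpi.coprime_iff_not_dvd.mpr hc).pow_left (m := m)
    refine hS (-(b * u)) ⟨a * p * u, ?_⟩
    rw [h]
    linear_combination (-(p : ℤ) * u) * hab
  rcases hp.eq_two_or_odd' with rfl | hodd
  · refine ⟨rfl, ?_⟩
    push_cast at *
    simp only [Finset.sum_range_succ, Finset.sum_range_zero, pow_zero, pow_one, zero_add] at key hS
    have h4 : (4 : ℤ) ∣ r + 1 := by
      by_contra h4
      exact key ((1 + r) / 2) (by omega) (by omega)
    obtain ⟨m, rfl⟩ := Nat.exists_eq_succ_of_ne_zero hm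
    obtain ⟨c, hc⟩ : ∃ c, r - 1 = 2 * c := hpr
    have hcop : IsCoprime ((2 : ℤ) ^ m) c :=
      (hpi.coprime_iff_not_dvd.mpr (by omega)).pow_left
    have hhalf : ∀ s : ℤ, (2 : ℤ) ^ (m + 1) ∣ s * (r - 1) → (2 : ℤ) ^ m ∣ s := by
      intro s hs
      rw [hc, pow_succ, show s * (2 * c) = s * c * 2 by ring] at hs
      exact hcop.dvd_of_dvd_mul_right (Int.dvd_of_mul_dvd_mul_right two_ne_zero hs)
    obtain ⟨d, hd⟩ := hhalf t hrt
    obtain ⟨e, he⟩ := hhalf (r + 1) (by convert hr using 1; ring)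
    have hd2 : ¬ (2 : ℤ) ∣ d := by
      rintro ⟨d, rfl⟩
      exact hS 0 ⟨d, by rw [hd, Nat.succ_eq_add_one]; ring⟩
    have he2 : (2 : ℤ) ∣ e := by
      by_contra he2
      obtain ⟨f, hf⟩ : (2 : ℤ) ∣ e + d := by omega
      refine hS 1 ⟨f, ?_⟩
      rw [add_comm 1 r, he, hd, pow_succ]
      linear_combination (2 : ℤ) ^ m * hf
    have hm0 : m ≠ 0 := by
      rintro rfl
      exact hr1 ⟨c, by simpa using hc⟩
    refine ⟨by omega, ?_, ?_⟩
    · obtain ⟨f, rfl⟩ := he2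
      exact ⟨f, by rw [he, Nat.succ_eq_add_one]; ring⟩
    · obtain ⟨f, hf⟩ : (2 : ℤ) ∣ d - 1 := by omega
      refine ⟨f, ?_⟩
      simp only [Nat.succ_eq_add_one, Nat.add_sub_cancel]
      rw [hd, pow_succ]
      linear_combination (2 : ℤ) ^ m * hf
  · exfalso
    obtain ⟨b, hb⟩ := hpr
    obtain ⟨c, hc⟩ := odd_sq_dvd_geom_sum₂_sub (R := ℤ) (a := 1) (b := b) hodd
    rw [show (1 : ℤ) + p * b = r by linarith] at hc
    simp only [one_pow, mul_one] at hc
    refine key (1 + p * c) ?_ (by linear_combination hc)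
    rw [dvd_add_left (dvd_mul_right _ _)]
    exact hpi.not_dvd_one

theorem SemiconjBy.zpow_mul_pow_of_zpow {G : Type*} [Group G] {g x : G} {r : ℤ}
    (h : SemiconjBy x g (g ^ r)) (i : ℤ) (k : ℕ) :
    (g ^ i * x) ^ k = g ^ (i * ∑ j ∈ Finset.range k, r ^ j) * x ^ k := by
  induction k with
  | zero => simp
  | succ k ih =>
    have h1 : x * g ^ (i * ∑ j ∈ Finset.range k, r ^ j) =
        g ^ (r * (i * ∑ j ∈ Finset.range k, r ^ j)) * x := by
      rw [zpow_mul g r]; exact (h.zpow_right _)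
    rw [pow_succ', ih, mul_assoc, ← mul_assoc x, h1, pow_succ' x, ← mul_assoc, ← mul_assoc,
      ← zpow_add, mul_assoc]
    congr 2
    simp only [Finset.sum_range_succ', pow_succ', ← Finset.mul_sum]
    ring

/-- If `x` normalizes but does not centralize the cyclic `p`-subgroup generated by `g`, which
contains `x ^ p` and all elements of order `p`, then `p = 2` and `x`, `g` satisfy the relations of a
generalized quaternion group. -/
theorem conj_eq_inv_and_sq_eq_of_pow_prime_mem_zpowers {G : Type*} [Group G] {p m : ℕ}
    (hp : p.Prime) {g x : G} (hg : orderOf g = p ^ m) (hU : ∀ y : G, y ^ p = 1 → y ∈ zpowers g)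
    (hx : x * g * x⁻¹ ∈ zpowers g) (hxp : x ^ p ∈ zpowers g) (hxg : ¬ Commute x g) :
    p = 2 ∧ 2 ≤ m ∧ x * g * x⁻¹ = g⁻¹ ∧ x ^ 2 = g ^ 2 ^ (m - 1) := by
  obtain ⟨r, hr⟩ := hx
  obtain ⟨t, ht⟩ := hxp
  simp only at hr ht
  have hone : ∀ i : ℤ, g ^ i = 1 ↔ (p : ℤ) ^ m ∣ i := fun i => by
    rw [← orderOf_dvd_iff_zpow_eq_one, hg]; push_cast; rfl
  have heq : ∀ i j : ℤ, (p : ℤ) ^ m ∣ i - j ↔ g ^ i = g ^ j := fun i j => by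
    rw [← hone, zpow_sub, mul_inv_eq_one]
  have hsemi : SemiconjBy x g (g ^ r) := by
    rw [SemiconjBy, hr, inv_mul_cancel_right]
  have hsemi_pow : ∀ k : ℕ, SemiconjBy (x ^ k) g (g ^ r ^ k) := by
    intro k
    induction k with
    | zero => simp
    | succ k ih =>
      rw [pow_succ', pow_succ', zpow_mul]
      exact (hsemi.zpow_right _).mul_left ih
  have hr1 : ¬ (p : ℤ) ^ m ∣ r - 1 := by
    rw [heq, zpow_one]
    intro h
    exact hxg (by rwa [h] at hsemi)
  obtain ⟨rfl, hm, hr_neg, ht_half⟩ := eq_two_and_dvd_of_forall_not_dvd hp (m := m) (r := r) (t := t)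
    (by
      rw [heq, zpow_one]
      have h1 := hsemi_pow p
      rw [← ht] at h1
      exact (mul_right_cancel ((((Commute.refl g).zpow_left t).eq.symm.trans h1.eq))).symm)
    (by
      rw [mul_sub, mul_one, heq, mul_comm, zpow_mul]
      have h1 : SemiconjBy x (g ^ t) (g ^ t) := by
        rw [ht]; exact (Commute.refl x).pow_right p
      exact mul_right_cancel ((hsemi.zpow_right t).eq.symm.trans h1.eq))
    hr1
    (fun i hi => by
      rw [← hone, zpow_add, ht, ← hsemi.zpow_mul_pow_of_zpow] at hi
      have hxz := (mul_mem_cancel_left (zpow_mem (mem_zpowers g) i)).mp (hU _ hi)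
      obtain ⟨s, rfl⟩ := hxz
      exact hxg ((Commute.refl g).zpow_left s))
  refine ⟨rfl, hm, ?_, ?_⟩
  · rw [← hr, ← zpow_neg_one, ← heq]
    simpa using hr_neg
  · rw [← ht, ← zpow_natCast, ← heq]
    simpa using ht_half

/-- The relations of the dicyclic group, with `g` of the right order and generating a subgroup of
index two, determine the group. -/
theorem nonempty_mulEquiv_quaternionGroup_s5 {G : Type*} [Group G] {n : ℕ} {g x : G}
    (hg : orderOf g = 2 * n) (hxg : x * g * x⁻¹ = g⁻¹) (hx : x ^ 2 = g ^ n)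
    (hxz : x ∉ zpowers g) (hG : ∀ y : G, y ∈ zpowers g ∨ x⁻¹ * y ∈ zpowers g) :
    Nonempty (G ≃* QuaternionGroup n) := by
  have heq : ∀ i j : ℤ, g ^ i = g ^ j ↔ (i : ZMod (2 * n)) = j := fun i j => by
    rw [zpow_eq_zpow_iff_modEq, hg, ZMod.intCast_eq_intCast_iff]
  have hcomm : ∀ i : ℤ, g ^ i * x = x * g ^ (-i) := fun i => by
    have h1 : SemiconjBy x g g⁻¹ := by rw [SemiconjBy, ← hxg, inv_mul_cancel_right]
    have h2 := (h1.zpow_right (-i)).eq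
    rw [h2, inv_zpow', neg_neg]
  let f : QuaternionGroup n → G := fun q => match q with
    | .a i => g ^ (i.cast : ℤ)
    | .xa i => x * g ^ (i.cast : ℤ)
  have hmul : ∀ q q', f (q * q') = f q * f q' := by
    rintro (i | i) (j | j)
    · simp only [QuaternionGroup.a_mul_a, f, ← zpow_add, heq]
      simp
    · simp only [QuaternionGroup.a_mul_xa, f]
      rw [← mul_assoc, hcomm, mul_assoc, ← zpow_add, mul_right_inj, heq]
      simp [sub_eq_neg_add]
    · simp only [QuaternionGroup.xa_mul_a, f]
      rw [mul_assoc, ← zpow_add, mul_right_inj, heq]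
      simp
    · simp only [QuaternionGroup.xa_mul_xa, f]
      rw [mul_assoc, ← mul_assoc _ x, hcomm, ← mul_assoc, ← mul_assoc, ← sq, hx, ← zpow_natCast,
        ← zpow_add, ← zpow_add, heq]
      simp
      ring
  have hinj : Function.Injective f := by
    have hne : ∀ i j : ℤ, g ^ i ≠ x * g ^ j := fun i j h => hxz <| by
      rw [eq_mul_inv_of_mul_eq h.symm]
      exact mul_mem (zpow_mem (mem_zpowers g) i) (inv_mem (zpow_mem (mem_zpowers g) j))
    rintro (i | i) (j | j) h
    · simpa [f, heq] using h
    · exact (hne _ _ h).elim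
    · exact (hne _ _ h.symm).elim
    · simpa [f, heq] using h
  have hsurj : Function.Surjective f := by
    intro y
    rcases hG y with ⟨i, hi⟩ | ⟨i, hi⟩
    · refine ⟨.a i, ?_⟩
      simp only at hi
      simp only [f]
      rw [← hi, heq]
      simp
    · refine ⟨.xa i, ?_⟩
      simp only at hi
      simp only [f]
      rw [← eq_inv_mul_iff_mul_eq, ← hi, heq]
      simp
  exact ⟨(MulEquiv.ofBijective (MonoidHom.mk' f hmul) ⟨hinj, hsurj⟩).symm⟩

/-- A finite `p`-group in which every nontrivial cyclic subgroup contains all elements of order `p`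
is cyclic or generalized quaternion. -/
theorem IsPGroup.isCyclic_or_isGeneralizedQuaternion_s5 {G : Type*} [Group G] [Finite G] {p : ℕ}
    (hp : p.Prime) (hG : IsPGroup p G)
    (hU : ∀ g : G, g ≠ 1 → ∀ y : G, y ^ p = 1 → y ∈ zpowers g) :
    IsCyclic G ∨ IsGeneralizedQuaternion G := by
  have : Fact p.Prime := ⟨hp⟩
  have : Group.IsNilpotent G := hG.isNilpotent
  obtain ⟨A, -, hA⟩ := (Set.toFinite
    {B : Subgroup G | B.Normal ∧ IsMulCommutative B}).exists_le_maximal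
      (a := ⊥) ⟨inferInstance, inferInstance⟩
  have hcent := centralizer_le_of_maximal hA
  have hAn := hA.prop.1
  have := hA.prop.2
  obtain ⟨g, rfl⟩ := hG.exists_eq_zpowers hp hU A
  have hcommute : ∀ y : G, Commute y g → y ∈ zpowers g := fun y hy => hcent <| by
    rw [mem_centralizer_iff]
    rintro _ ⟨i, rfl⟩
    exact (hy.zpow_right i).eq.symm
  rcases eq_or_ne g 1 with rfl | hg1
  · exact .inl ⟨1, fun y => hcommute y (Commute.one_right y)⟩
  obtain ⟨m, hm⟩ := IsPGroup.iff_orderOf.mp hG g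
  by_cases htop : ∀ y, y ∈ zpowers g
  · exact .inl ⟨g, htop⟩
  right
  have hrel : ∀ y, y ∉ zpowers g → y ^ p ∈ zpowers g →
      p = 2 ∧ 2 ≤ m ∧ y * g * y⁻¹ = g⁻¹ ∧ y ^ 2 = g ^ 2 ^ (m - 1) := fun y hy hyp =>
    conj_eq_inv_and_sq_eq_of_pow_prime_mem_zpowers hp hm (hU g hg1)
      (hAn.conj_mem g (mem_zpowers g) y) hyp fun h => hy (hcommute y h)
  push Not at htop
  obtain ⟨y, hy⟩ := htop
  obtain ⟨j, hj, hjp⟩ := hG.exists_pow_notMem_pow_prime_mem hy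
  generalize y ^ j = x at hj hjp
  obtain ⟨rfl, hm2, hxg, hx2⟩ := hrel x hj hjp
  -- `-1` is not a square modulo `4`, so no element acts on `⟨g⟩` with order four
  have hsq : ∀ y, (y ^ 2) ^ 2 ∈ zpowers g → y ^ 2 ∈ zpowers g := by
    intro y hy4
    by_contra hy2
    obtain ⟨-, -, hinv, -⟩ := hrel _ hy2 hy4
    obtain ⟨s, hs⟩ := hAn.conj_mem g (mem_zpowers g) y
    simp only at hs
    have h1 : y ^ 2 * g * (y ^ 2)⁻¹ = g ^ (s * s) := by
      rw [zpow_mul, hs, conj_zpow, hs, sq]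
      group
    rw [hinv, ← zpow_neg_one, zpow_eq_zpow_iff_modEq, hm, Int.modEq_iff_dvd] at h1
    have h4 : (4 : ℤ) ∣ s * s - -1 := by
      refine Dvd.dvd.trans ?_ h1
      exact_mod_cast pow_dvd_pow 2 hm2
    rcases Int.even_or_odd' s with ⟨c, rfl | rfl⟩
    all_goals ring_nf at h4; omega
  have hsq' : ∀ y : G, y ^ 2 ∈ zpowers g := by
    intro y
    by_contra h
    obtain ⟨k, hk⟩ := isPGroup_iff_pow_pow_eq_one.mp hG (y ^ 2)
    have key : ∀ k, (y ^ 2) ^ 2 ^ k ∉ zpowers g := by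
      intro k
      induction k with
      | zero => simpa using h
      | succ k ih =>
        intro h2
        refine ih ?_
        rw [pow_right_comm]
        refine hsq _ ?_
        rwa [pow_right_comm y, ← pow_mul, ← pow_succ]
    exact key k (hk ▸ one_mem _)
  refine ⟨m + 1, by omega, ?_⟩
  obtain ⟨m, rfl⟩ := Nat.exists_eq_add_of_le' (by omega : 1 ≤ m)
  refine nonempty_mulEquiv_quaternionGroup_s5 (x := x) ?_ hxg hx2 hj fun y => ?_
  · rw [hm]; exact pow_succ' 2 m
  by_cases hy : y ∈ zpowers g
  · exact .inl hy
  · right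
    obtain ⟨-, -, hyg, -⟩ := hrel y hy (hsq' y)
    refine hcommute _ ?_
    have hsemi : ∀ z, z * g * z⁻¹ = g⁻¹ → SemiconjBy z g g⁻¹ := fun z hz => by
      rw [SemiconjBy, ← hz, inv_mul_cancel_right]
    exact (hsemi x hxg).inv_symm_left.mul_left (hsemi y hyg)

theorem QuaternionGroup.exists_orderOf_eq_four_not_commute {n : ℕ} (hn : 2 ≤ n) :
    ∃ x y : QuaternionGroup n, orderOf x = 4 ∧ orderOf y = 4 ∧ ¬ Commute x y := by
  have : NeZero n := ⟨by omega⟩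
  refine ⟨.xa 0, .xa 1, orderOf_xa 0, orderOf_xa 1, fun h => ?_⟩
  have h1 := h.eq
  simp only [xa_mul_xa, a.injEq] at h1
  have h2 : ((2 : ℕ) : ZMod (2 * n)) = 0 := by
    push_cast
    linear_combination h1
  rw [ZMod.natCast_eq_zero_iff] at h2
  have := Nat.le_of_dvd (by norm_num) h2
  omega

section UniqueSubgroup

variable {G : Type*} [Group G] {p n k : ℕ} {H : Subgroup G}

/-- If `H` is the unique subgroup of order `p ^ k`, it contains the elements of order at most
`p ^ k`. -/
theorem mem_of_orderOf_eq_of_unique_card (hp : p.Prime) (hcard : Nat.card G = p ^ n) (hkn : k ≤ n)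
    (huniq : ∀ K : Subgroup G, Nat.card K = p ^ k → K = H) {x : G} {j : ℕ} (hjk : j ≤ k)
    (hx : orderOf x = p ^ j) : x ∈ H := by
  have : Fact p.Prime := ⟨hp⟩
  have : Finite G := Nat.finite_of_card_ne_zero (by rw [hcard]; exact pow_ne_zero _ hp.ne_zero)
  obtain ⟨K, hK, hxK⟩ := Sylow.exists_subgroup_card_pow_prime_le p (m := k)
    (hcard ▸ pow_dvd_pow p hkn) (zpowers x) (by rw [Nat.card_zpowers, hx]) hjk
  exact huniq K hK ▸ hxK (mem_zpowers x)

/-- If `H` is the unique subgroup of order `p ^ k`, it lies in every cyclic subgroup of order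
at least `p ^ k`. -/
theorem eq_zpowers_pow_of_unique_card (hp : p.Prime)
    (huniq : ∀ K : Subgroup G, Nat.card K = p ^ k → K = H) {x : G} {j : ℕ} (hkj : k ≤ j)
    (hx : orderOf x = p ^ j) : zpowers (x ^ p ^ (j - k)) = H := by
  refine huniq _ ?_
  rw [Nat.card_zpowers, orderOf_pow_of_dvd (pow_ne_zero _ hp.ne_zero)
    (hx ▸ pow_dvd_pow p (Nat.sub_le j k)), hx, Nat.pow_div (Nat.sub_le j k) hp.pos]
  congr 1
  omega

theorem exists_eq_zpowers_of_unique_card (hp : p.Prime) (hcard : Nat.card G = p ^ n) (hkn : k < n)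
    (hH : Nat.card H = p ^ k) (huniq : ∀ K : Subgroup G, Nat.card K = p ^ k → K = H) :
    ∃ h, H = zpowers h := by
  have : Fact p.Prime := ⟨hp⟩
  obtain ⟨x, hx⟩ : ∃ x, x ∉ H := by
    by_contra! h
    rw [(eq_top_iff' H).mpr h, card_top, hcard] at hH
    exact hkn.ne' (Nat.pow_right_injective hp.two_le hH)
  obtain ⟨j, hj⟩ := IsPGroup.iff_orderOf.mp (IsPGroup.of_card hcard) x
  rcases le_total j k with hjk | hkj
  · exact (hx (mem_of_orderOf_eq_of_unique_card hp hcard hkn.le huniq hjk hj)).elim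
  · exact ⟨_, (eq_zpowers_pow_of_unique_card hp huniq hkj hj).symm⟩

/-- A unique subgroup of order `p ^ k` forces a unique subgroup of order `p`. -/
theorem mem_zpowers_of_unique_card (hp : p.Prime) (hcard : Nat.card G = p ^ n) (h0k : 0 < k)
    (hkn : k < n) (hH : Nat.card H = p ^ k)
    (huniq : ∀ K : Subgroup G, Nat.card K = p ^ k → K = H) {g : G} (hg : g ≠ 1) {y : G}
    (hy : y ^ p = 1) : y ∈ zpowers g := by
  have : Fact p.Prime := ⟨hp⟩
  have hG := IsPGroup.of_card hcard
  have hyH : y ∈ H := by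
    have hdvd : orderOf y ∣ p ^ 1 := by
      rw [pow_one]; exact orderOf_dvd_of_pow_eq_one hy
    obtain ⟨j, hj1, hj⟩ := (Nat.dvd_prime_pow hp).mp hdvd
    exact mem_of_orderOf_eq_of_unique_card hp hcard hkn.le huniq (hj1.trans h0k) hj
  obtain ⟨j, hj⟩ := IsPGroup.iff_orderOf.mp hG g
  rcases le_total k j with hkj | hjk
  · rw [← eq_zpowers_pow_of_unique_card hp huniq hkj hj] at hyH
    exact zpowers_le.mpr (pow_mem (mem_zpowers g) _) hyH
  have hgH := mem_of_orderOf_eq_of_unique_card hp hcard hkn.le huniq hjk hj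
  obtain ⟨h, rfl⟩ := exists_eq_zpowers_of_unique_card hp hcard hkn hH huniq
  rw [Nat.card_zpowers] at hH
  obtain ⟨k, rfl⟩ := Nat.exists_eq_add_of_le' h0k
  have horder : ∀ (w : G) (i : ℕ), orderOf w = p ^ (i + 1) → orderOf (w ^ p ^ i) = p := by
    intro w i hw
    rw [orderOf_pow_of_dvd (pow_ne_zero _ hp.ne_zero) (hw ▸ pow_dvd_pow p i.le_succ), hw,
      Nat.pow_div i.le_succ hp.pos]
    simp
  have hz := horder h k hH
  have hmem : ∀ w ∈ zpowers h, w ^ p = 1 → w ∈ zpowers (h ^ p ^ k) := by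
    rintro _ ⟨i, rfl⟩ hw
    simp only at hw ⊢
    rw [← zpow_natCast, ← zpow_mul, ← orderOf_dvd_iff_zpow_eq_one, hH, pow_succ] at hw
    push_cast at hw
    obtain ⟨c, rfl⟩ := Int.dvd_of_mul_dvd_mul_right (by exact_mod_cast hp.ne_zero) hw
    exact ⟨c, by simp only [zpow_mul]; norm_cast⟩
  obtain ⟨e, rfl⟩ : ∃ e, j = e + 1 := Nat.exists_eq_succ_of_ne_zero <| by
    rintro rfl
    exact hg (orderOf_eq_one_iff.mp (by rw [hj, pow_zero]))
  have hge := horder g e hj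
  have hle : zpowers (g ^ p ^ e) ≤ zpowers (h ^ p ^ k) :=
    zpowers_le.mpr (hmem _ (pow_mem hgH _) (orderOf_dvd_iff_pow_eq_one.mp hge.dvd))
  have : Finite (zpowers (h ^ p ^ k)) :=
    Nat.finite_of_card_ne_zero (by rw [Nat.card_zpowers, hz]; exact hp.ne_zero)
  have heq := eq_of_le_of_card_ge hle (by rw [Nat.card_zpowers, Nat.card_zpowers, hz, hge])
  exact zpowers_le.mpr (pow_mem (mem_zpowers g) _) (heq ▸ hmem y hyH hy)

end UniqueSubgroup

theorem cyclic_or_generalized_quaternion_of_unique_subgroup {Q : Type*} [Group Q]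
    {p n k : ℕ} (hp : p.Prime) (hcard : Nat.card Q = p ^ n) (h0k : 0 < k) (hkn : k < n)
    (huniq : ∃! H : Subgroup Q, Nat.card H = p ^ k) :
    (IsCyclic Q ∨ IsGeneralizedQuaternion Q) ∧
      (IsGeneralizedQuaternion Q → ¬IsCyclic Q → p ^ k = 2) := by
  have : Fact p.Prime := ⟨hp⟩
  have : Finite Q := Nat.finite_of_card_ne_zero (by rw [hcard]; exact pow_ne_zero _ hp.ne_zero)
  obtain ⟨H, hH, huniq⟩ := huniq
  refine ⟨(IsPGroup.of_card hcard).isCyclic_or_isGeneralizedQuaternion_s5 hp fun g hg y hy =>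
    mem_zpowers_of_unique_card hp hcard h0k hkn hH huniq hg hy, ?_⟩
  rintro ⟨l, hl, ⟨e⟩⟩ -
  obtain ⟨x, y, hx, hy, hxy⟩ := QuaternionGroup.exists_orderOf_eq_four_not_commute
    (n := 2 ^ (l - 2)) (Nat.le_self_pow (by omega) 2)
  rw [← e.symm.orderOf_eq] at hx hy
  obtain rfl : p = 2 := by
    refine ((Nat.prime_dvd_prime_iff_eq Nat.prime_two hp).mp ?_).symm
    refine Nat.prime_two.dvd_of_dvd_pow (n := n)
      (hcard ▸ Dvd.dvd.trans ?_ (orderOf_dvd_natCard (e.symm x)))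
    rw [hx]; norm_num
  suffices k = 1 by rw [this, pow_one]
  by_contra hk1
  obtain ⟨h, rfl⟩ := exists_eq_zpowers_of_unique_card hp hcard hkn hH huniq
  have hxH := mem_of_orderOf_eq_of_unique_card hp hcard hkn.le huniq (j := 2) (by omega) hx
  have hyH := mem_of_orderOf_eq_of_unique_card hp hcard hkn.le huniq (j := 2) (by omega) hy
  have h1 : Commute (e.symm x) (e.symm y) := setLike_mul_comm hxH hyH
  exact hxy (by simpa using h1.map e)
end

section
/- Let G be a finite group, N a normal subgroup of G, and C a cyclic group of order |G| (e.g., C = ZMod |G|). Let C_N denote the unique subgroup of C of order |N|, and for each subgroup K of G let C_K denote the unique subgroup of C of order |K|. Then G and N satisfy the gcd property (for every subgroup H of G, |H ∩ N| = gcd(|H|, |N|)) if and only if for every subgroup K of G, the number of C_K-fixed points of the coset action of C on C/C_N equals the number of K-fixed points of the coset action of G on G/N. -/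
/-- A subgroup `K` contained in a normal subgroup `N` fixes every coset of `N`. -/
theorem card_fixedPoints_quotient_of_le {G : Type*} [Group G] {N K : Subgroup G} [N.Normal]
    (h : K ≤ N) : Nat.card (MulAction.fixedPoints K (G ⧸ N)) = N.index := by
  have huniv : MulAction.fixedPoints K (G ⧸ N) = Set.univ := by
    refine Set.eq_univ_of_forall fun x k => ?_
    induction x using QuotientGroup.induction_on with
    | H g =>
      change ((k.1 * g : G) : G ⧸ N) = g
      rw [QuotientGroup.mk_mul, (QuotientGroup.eq_one_iff k.1).2 (h k.2), one_mul]
  rw [huniv, Nat.card_univ, Subgroup.index]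

/-- A subgroup `K` not contained in a normal subgroup `N` fixes no coset of `N`. -/
theorem card_fixedPoints_quotient_of_not_le {G : Type*} [Group G] {N K : Subgroup G} [N.Normal]
    (h : ¬ K ≤ N) : Nat.card (MulAction.fixedPoints K (G ⧸ N)) = 0 := by
  have hempty : MulAction.fixedPoints K (G ⧸ N) = ∅ := by
    refine Set.eq_empty_of_forall_notMem fun x hx => h fun k hk => ?_
    induction x using QuotientGroup.induction_on with
    | H g =>
      have hkg : ((k * g : G) : G ⧸ N) = g := hx ⟨k, hk⟩
      rw [QuotientGroup.mk_mul, mul_eq_right] at hkg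
      exact (QuotientGroup.eq_one_iff k).1 hkg
  simp [hempty]

/-- In a finite cyclic group, inclusion of subgroups is divisibility of orders. -/
theorem IsCyclic.subgroup_le_iff_card_dvd_card {C : Type*} [Group C] [Finite C] [IsCyclic C]
    {H K : Subgroup C} : H ≤ K ↔ Nat.card H ∣ Nat.card K := by
  classical
  refine ⟨Subgroup.card_dvd_of_le, fun hdvd x hx => ?_⟩
  have := Fintype.ofFinite C
  let roots : Finset C := {y : C | y ^ Nat.card K = 1}
  have hsub : (K : Set C).toFinset ⊆ roots := fun y hy => by
    simpa [roots] using
      orderOf_dvd_iff_pow_eq_one.1 (Subgroup.orderOf_dvd_natCard K (Set.mem_toFinset.1 hy))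
  have hcard : roots.card ≤ (K : Set C).toFinset.card := by
    rw [Set.toFinset_card, ← Nat.card_eq_fintype_card]
    exact IsCyclic.card_pow_eq_one_le Nat.card_pos
  have hxroots : x ∈ roots := by
    simpa [roots] using
      orderOf_dvd_iff_pow_eq_one.1 ((Subgroup.orderOf_dvd_natCard H hx).trans hdvd)
  rw [← Finset.eq_of_subset_of_card_le hsub hcard] at hxroots
  simpa using hxroots

/-- A finite cyclic group has a subgroup of every order dividing its own. -/
theorem IsCyclic.exists_subgroup_card_eq {C : Type*} [Group C] [Finite C] [IsCyclic C]
    {d : ℕ} (hd : d ∣ Nat.card C) : ∃ H : Subgroup C, Nat.card H = d := by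
  obtain ⟨g, hg⟩ := IsCyclic.exists_ofOrder_eq_natCard (α := C)
  refine ⟨Subgroup.zpowers (g ^ (Nat.card C / d)), ?_⟩
  rw [Nat.card_zpowers, orderOf_pow_of_dvd (Nat.div_ne_zero_iff_of_dvd hd |>.2
    ⟨Nat.card_pos.ne', (Nat.pos_of_dvd_of_pos hd Nat.card_pos).ne'⟩)
    (hg.symm ▸ Nat.div_dvd_of_dvd hd), hg, Nat.div_div_self hd Nat.card_pos.ne']

/-- The gcd property for `N` says that `N` contains every subgroup whose order divides `|N|`. -/
theorem card_inf_eq_gcd_iff_le_of_card_dvd {G : Type*} [Group G] [Finite G] (N : Subgroup G) :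
    (∀ H : Subgroup G, Nat.card (H ⊓ N : Subgroup G) = Nat.gcd (Nat.card H) (Nat.card N)) ↔
      ∀ K : Subgroup G, Nat.card K ∣ Nat.card N → K ≤ N := by
  refine ⟨fun h K hK => ?_, fun h H => Nat.dvd_antisymm ?_ ?_⟩
  · have hcard := h K
    rw [Nat.gcd_eq_left hK] at hcard
    exact inf_eq_left.1 (Subgroup.eq_of_le_of_card_ge inf_le_left hcard.ge)
  · exact Nat.dvd_gcd (Subgroup.card_dvd_of_le inf_le_left) (Subgroup.card_dvd_of_le inf_le_right)
  · refine (Nat.dvd_iff_prime_pow_dvd_dvd _ _).2 fun p k hp hpk => ?_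
    have := Fact.mk hp
    obtain ⟨P, hP⟩ := Sylow.exists_subgroup_card_pow_prime p (hpk.trans (Nat.gcd_dvd_left _ _))
    have hPcard : Nat.card (P.map H.subtype) = p ^ k := by
      rw [Subgroup.card_map_of_injective H.subtype_injective, hP]
    have hPN : P.map H.subtype ≤ N := h _ (hPcard ▸ hpk.trans (Nat.gcd_dvd_right _ _))
    exact hPcard ▸ Subgroup.card_dvd_of_le (le_inf (Subgroup.map_subtype_le P) hPN)

theorem gcd_property_iff_fixed_points_eq {G : Type*} [Group G] [Finite G] (N : Subgroup G)
    [N.Normal] {C : Type*} [Group C] [Finite C] (hC : IsCyclic C)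
    (hcardC : Nat.card C = Nat.card G)
    (CN : Subgroup C) (hCN : Nat.card CN = Nat.card N) :
    (∀ H : Subgroup G, Nat.card (H ⊓ N : Subgroup G) = Nat.gcd (Nat.card H) (Nat.card N)) ↔
      ∀ (K : Subgroup G) (CK : Subgroup C), Nat.card CK = Nat.card K →
        Nat.card (MulAction.fixedPoints CK (C ⧸ CN)) =
          Nat.card (MulAction.fixedPoints K (G ⧸ N)) := by
  have hnormal : CN.Normal := Subgroup.normal_of_isMulCommutative CN
  have hindex : CN.index = N.index := by
    have hmul := CN.card_mul_index
    rw [hCN, hcardC, ← N.card_mul_index] at hmul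
    exact Nat.eq_of_mul_eq_mul_left Nat.card_pos hmul
  rw [card_inf_eq_gcd_iff_le_of_card_dvd]
  refine ⟨fun h K CK hCK => ?_, fun h K hK => ?_⟩
  · have hle : CK ≤ CN ↔ K ≤ N := by
      rw [IsCyclic.subgroup_le_iff_card_dvd_card, hCK, hCN]
      exact ⟨h K, Subgroup.card_dvd_of_le⟩
    by_cases hKN : K ≤ N
    · rw [card_fixedPoints_quotient_of_le hKN, card_fixedPoints_quotient_of_le (hle.2 hKN), hindex]
    · rw [card_fixedPoints_quotient_of_not_le hKN,
        card_fixedPoints_quotient_of_not_le (mt hle.1 hKN)]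
  · obtain ⟨CK, hCK⟩ := IsCyclic.exists_subgroup_card_eq (C := C)
      (hcardC ▸ K.card_subgroup_dvd_card)
    by_contra hKN
    have hle : CK ≤ CN := IsCyclic.subgroup_le_iff_card_dvd_card.2 (by rwa [hCK, hCN])
    have hfixed := h K CK hCK
    rw [card_fixedPoints_quotient_of_le hle, card_fixedPoints_quotient_of_not_le hKN] at hfixed
    exact CN.index_ne_zero_of_finite hfixed
end

section
/- Let G be a finite group and N a normal cyclic subgroup of G such that G and N satisfy the gcd property, and let d be a divisor of |G|. Then G has a subgroup of order d if and only if the quotient group G/N has a subgroup of order d / gcd(d, |N|). -/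
/-- Lagrange's theorem for a subgroup `H ≤ K`, in terms of the relative index. -/
theorem Subgroup.card_mul_relIndex_of_le {G : Type*} [Group G] {H K : Subgroup G} (h : H ≤ K) :
    Nat.card H * H.relIndex K = Nat.card K := by
  rw [← Subgroup.relIndex_bot_left, Subgroup.relIndex_mul_relIndex _ _ _ bot_le h,
    Subgroup.relIndex_bot_left]

/-- The kernel of `x ↦ x ^ g` on a cyclic normal subgroup of order divisible by `g` is a
subgroup of order `g`, normal in the whole group. -/
theorem Subgroup.exists_normal_le_card_eq_of_isCyclic {G : Type*} [Group G] [Finite G]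
    (N : Subgroup G) [N.Normal] [IsCyclic N] {g : ℕ} (hg : g ∣ Nat.card N) :
    ∃ M : Subgroup G, M.Normal ∧ M ≤ N ∧ Nat.card M = g := by
  let _ : CommGroup N := IsCyclic.commGroup
  let A : Subgroup N := (powMonoidHom g : N →* N).ker
  have hA : A.Characteristic := by
    refine Subgroup.characteristic_iff_le_comap.2 fun φ x hx => ?_
    have hx' : x ^ g = 1 := hx
    change φ x ^ g = 1
    rw [← map_pow, hx', map_one]
  refine ⟨A.map N.subtype, inferInstance, Subgroup.map_subtype_le A, ?_⟩
  rw [Subgroup.card_map_of_injective N.subtype_injective, IsCyclic.card_powMonoidHom_ker,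
    Nat.gcd_eq_right hg]

/-- If `M ≤ N` are normal subgroups and `N / M` has order coprime to its index, then the preimage
of a complement of `N / M` has order `|M| * [G : N]`. -/
theorem Subgroup.exists_card_eq_mul_index_of_coprime {G : Type*} [Group G]
    {M N : Subgroup G} [M.Normal] [N.Normal] (hMN : M ≤ N)
    (h : (M.relIndex N).Coprime N.index) :
    ∃ H : Subgroup G, Nat.card H = Nat.card M * N.index := by
  have hsurj := QuotientGroup.mk'_surjective M
  have : (N.map (QuotientGroup.mk' M)).Normal := Subgroup.Normal.map ‹_› _ hsurj
  have hcard : Nat.card (N.map (QuotientGroup.mk' M)) = M.relIndex N := by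
    rw [← Subgroup.relIndex_ker, QuotientGroup.ker_mk']
  have hindex : (N.map (QuotientGroup.mk' M)).index = N.index :=
    Subgroup.index_map_eq _ hsurj (by rwa [QuotientGroup.ker_mk'])
  obtain ⟨Q, hQ⟩ := Subgroup.exists_left_complement'_of_coprime
    (N := N.map (QuotientGroup.mk' M)) (by rwa [hcard, hindex])
  refine ⟨Q.comap (QuotientGroup.mk' M), ?_⟩
  rw [← hindex, hQ.index_eq_card]
  exact QuotientGroup.card_preimage_mk M (Q : Set (G ⧸ M))

theorem exists_subgroup_iff_quotient_of_gcd_property {G : Type*} [Group G] [Finite G]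
    (N : Subgroup G) [N.Normal] (hcyc : IsCyclic N)
    (hgcd : ∀ H : Subgroup G, Nat.card (H ⊓ N : Subgroup G) = Nat.gcd (Nat.card H) (Nat.card N))
    (d : ℕ) (hd : d ∣ Nat.card G) :
    (∃ H : Subgroup G, Nat.card H = d) ↔
      ∃ K : Subgroup (G ⧸ N), Nat.card K = d / Nat.gcd d (Nat.card N) := by
  have hg : 0 < Nat.gcd d (Nat.card N) := Nat.gcd_pos_of_pos_right _ Nat.card_pos
  constructor
  · rintro ⟨H, rfl⟩
    refine ⟨H.map (QuotientGroup.mk' N), ?_⟩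
    rw [← Subgroup.relIndex_ker, QuotientGroup.ker_mk']
    refine (Nat.div_eq_of_eq_mul_right hg ?_).symm
    rw [← hgcd, ← Subgroup.inf_relIndex_left,
      Subgroup.card_mul_relIndex_of_le inf_le_left]
  · rintro ⟨K, hK⟩
    obtain ⟨M, hM, hMN, hMcard⟩ :=
      N.exists_normal_le_card_eq_of_isCyclic (Nat.gcd_dvd_right d (Nat.card N))
    let L : Subgroup G := K.comap (QuotientGroup.mk' N)
    have hNL : N ≤ L := by
      simpa [QuotientGroup.ker_mk'] using MonoidHom.ker_le_comap (QuotientGroup.mk' N) K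
    have hindex : (N.subgroupOf L).index = d / Nat.gcd d (Nat.card N) := by
      rw [← hK, ← Subgroup.map_comap_eq_self_of_surjective (QuotientGroup.mk'_surjective N) K,
        ← Subgroup.relIndex_ker, QuotientGroup.ker_mk']
      rfl
    have hrel : (M.subgroupOf L).relIndex (N.subgroupOf L) =
        Nat.card N / Nat.gcd d (Nat.card N) := by
      rw [Subgroup.relIndex_subgroupOf hNL]
      refine (Nat.div_eq_of_eq_mul_right hg ?_).symm
      rw [← hMcard, Subgroup.card_mul_relIndex_of_le hMN]
    obtain ⟨H, hH⟩ := Subgroup.exists_card_eq_mul_index_of_coprime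
      (M := M.subgroupOf L) (N := N.subgroupOf L)
      (Subgroup.comap_mono hMN)
      (by rw [hrel, hindex]; exact (Nat.coprime_div_gcd_div_gcd hg).symm)
    refine ⟨H.map L.subtype, ?_⟩
    rw [Subgroup.card_map_of_injective L.subtype_injective, hH, hindex,
      Nat.card_congr (Subgroup.subgroupOfEquivOfLe (hMN.trans hNL)).toEquiv, hMcard,
      Nat.mul_div_cancel' (Nat.gcd_dvd_left _ _)]
end

section
/- Let G be a finite group and N a normal subgroup of G such that for every cyclic subgroup L of G, the subgroup LN generated by L and N is cyclic. Then N is cyclic, N is contained in the center of G, and G and N satisfy the gcd property (for every subgroup H of G, |H ∩ N| = gcd(|H|, |N|)). -/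
theorem IsCyclic.mem_of_pow_natCard_eq_one {C : Type*} [Group C] [Finite C] [IsCyclic C]
    (K : Subgroup C) {x : C} (hx : x ^ Nat.card K = 1) : x ∈ K := by
  classical
  have := Fintype.ofFinite C
  have hsub : (K : Set C).toFinset ⊆ ({a : C | a ^ Nat.card K = 1} : Finset C) := by
    intro a ha
    have haK : a ∈ K := by simpa using ha
    simpa using orderOf_dvd_iff_pow_eq_one.mp (K.orderOf_dvd_natCard haK)
  have heq := Finset.eq_of_subset_of_card_le hsub <| by
    rw [Set.toFinset_card, ← Nat.card_eq_fintype_card]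
    exact IsCyclic.card_pow_eq_one_le Nat.card_pos
  have hmem : x ∈ (K : Set C).toFinset := heq ▸ Finset.mem_filter.mpr ⟨Finset.mem_univ x, hx⟩
  simpa using hmem

theorem Subgroup.mem_of_pow_natCard_eq_one_of_le {G : Type*} [Group G] [Finite G]
    {N C : Subgroup G} [IsCyclic C] (hNC : N ≤ C) {x : G} (hxC : x ∈ C)
    (hx : x ^ Nat.card N = 1) : x ∈ N := by
  have hmem : (⟨x, hxC⟩ : C) ∈ N.subgroupOf C := by
    apply IsCyclic.mem_of_pow_natCard_eq_one
    rw [Nat.card_congr (Subgroup.subgroupOfEquivOfLe hNC).toEquiv]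
    exact Subtype.ext hx
  exact Subgroup.mem_subgroupOf.mp hmem

/-- If `N` contains every element whose order divides `|N|`, then `|H ∩ N| = gcd(|H|, |N|)`. -/
theorem Subgroup.natCard_inf_eq_gcd_of_forall_pow_eq_one_mem {G : Type*} [Group G] [Finite G]
    (N H : Subgroup G) (hN : ∀ x : G, x ^ Nat.card N = 1 → x ∈ N) :
    Nat.card (H ⊓ N : Subgroup G) = Nat.gcd (Nat.card H) (Nat.card N) := by
  apply Nat.dvd_antisymm
  · exact Nat.dvd_gcd (Subgroup.card_dvd_of_le inf_le_left) (Subgroup.card_dvd_of_le inf_le_right)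
  · refine (Nat.dvd_iff_prime_pow_dvd_dvd _ _).mpr fun p k hp hk ↦ ?_
    have := Fact.mk hp
    obtain ⟨K, hK⟩ := Sylow.exists_subgroup_card_pow_prime p (hk.trans (Nat.gcd_dvd_left _ _))
    have hcard : Nat.card (K.map H.subtype) = p ^ k := by
      rw [Subgroup.card_map_of_injective H.subtype_injective, hK]
    rw [← hcard] at hk ⊢
    refine Subgroup.card_dvd_of_le (le_inf (Subgroup.map_subtype_le K) fun x hx ↦ hN x ?_)
    exact orderOf_dvd_iff_pow_eq_one.mp <|
      (Subgroup.orderOf_dvd_natCard _ hx).trans (hk.trans (Nat.gcd_dvd_right _ _))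

theorem cyclic_central_gcd_of_sup_cyclic {G : Type*} [Group G] [Finite G] (N : Subgroup G)
    [N.Normal] (h : ∀ L : Subgroup G, IsCyclic L → IsCyclic (L ⊔ N : Subgroup G)) :
    IsCyclic N ∧ N ≤ Subgroup.center G ∧
      ∀ H : Subgroup G, Nat.card (H ⊓ N : Subgroup G) = Nat.gcd (Nat.card H) (Nat.card N) := by
  have hcyc (g : G) : IsCyclic (Subgroup.zpowers g ⊔ N : Subgroup G) := h _ inferInstance
  have hmem (g : G) : g ∈ Subgroup.zpowers g ⊔ N :=
    Subgroup.mem_sup_left (Subgroup.mem_zpowers g)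
  refine ⟨?_, fun n hn ↦ Subgroup.mem_center_iff.mpr fun g ↦ ?_, fun H ↦ ?_⟩
  · have := hcyc 1
    exact Subgroup.isCyclic_of_le (le_sup_right : N ≤ Subgroup.zpowers 1 ⊔ N)
  · have := hcyc g
    exact congrArg Subtype.val <| mul_comm' (⟨g, hmem g⟩ : (Subgroup.zpowers g ⊔ N : Subgroup G))
      ⟨n, Subgroup.mem_sup_right hn⟩
  · refine N.natCard_inf_eq_gcd_of_forall_pow_eq_one_mem H fun x hx ↦ ?_
    have := hcyc x
    exact Subgroup.mem_of_pow_natCard_eq_one_of_le le_sup_right (hmem x) hx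
end

section
/- The center of SL(2, F_5) is contained in the Frattini subgroup of SL(2, F_5). -/
open scoped commutatorElement in
/-- A central element lying in the commutator subgroup belongs to every maximal subgroup. -/
theorem center_inf_commutator_le_frattini (G : Type*) [Group G] :
    Subgroup.center G ⊓ commutator G ≤ frattini G := by
  refine le_iInf₂ fun M hM z hz ↦ ?_
  by_cases hZ : Subgroup.center G ≤ M
  · exact hZ hz.1
  have hsup : M ⊔ Subgroup.center G = ⊤ := hM.2 _ (left_lt_sup.mpr hZ)
  have hdecomp (g : G) : ∃ m ∈ M, ∃ c ∈ Subgroup.center G, m * c = g :=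
    Subgroup.mem_sup_of_normal_right.mp (hsup ▸ Subgroup.mem_top g)
  suffices hcomm : commutator G ≤ M from hcomm hz.2
  rw [commutator_def, Subgroup.commutator_le]
  intro g _ h _
  obtain ⟨m, hm, c, hc, rfl⟩ := hdecomp g
  obtain ⟨n, hn, d, hd, rfl⟩ := hdecomp h
  have hc' := Subgroup.mem_center_iff.mp hc
  have hd' := Subgroup.mem_center_iff.mp hd
  have heq : ⁅m * c, n * d⁆ = ⁅m, n⁆ := by
    calc ⁅m * c, n * d⁆ = m * (c * (n * d)) * c⁻¹ * m⁻¹ * d⁻¹ * n⁻¹ := by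
          rw [commutatorElement_def]; group
      _ = m * n * (d * m⁻¹) * d⁻¹ * n⁻¹ := by rw [← hc']; group
      _ = ⁅m, n⁆ := by rw [← hd', commutatorElement_def]; group
  rw [heq, commutatorElement_def]
  exact M.mul_mem (M.mul_mem (M.mul_mem hm hn) (M.inv_mem hm)) (M.inv_mem hn)

theorem SL2_F5_center_le_frattini :
    Subgroup.center (Matrix.SpecialLinearGroup (Fin 2) (ZMod 5)) ≤
      frattini (Matrix.SpecialLinearGroup (Fin 2) (ZMod 5)) := by
  have htwo : (2 : ZMod 5) ≠ 0 := by decide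
  have hfour : (2 : ZMod 5) ^ 2 ≠ 1 := by decide
  have : Fact (Nat.Prime 5) := ⟨by norm_num⟩
  have hperfect : commutator (Matrix.SpecialLinearGroup (Fin 2) (ZMod 5)) = ⊤ :=
    Matrix.SL2.commutator_eq_top htwo hfour
  simpa [hperfect] using
    center_inf_commutator_le_frattini (Matrix.SpecialLinearGroup (Fin 2) (ZMod 5))
end
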